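/- arXiv:2208.01384 — 14 statements merged into one kernel-verified Lean document; each statement's English description precedes it below -/
import Mathlib

section
/- For every α ∈ (0,1), every nonuniform time mesh, and all indices k ≥ 2 and 1 ≤ j ≤ k−1, the L2-1_σ coefficients satisfy a_j^{k+1} − a_j^k > 0. -/
open MeasureTheory Real Finset

noncomputable section

/-- Time step `τ_j = t_j - t_{j-1}`. -/
def tau (t : ℕ → ℝ) (j : ℕ) : ℝ := t j - t (j - 1)

/-- Step ratio `ρ_j = τ_j / τ_{j-1}`. -/
def rho (t : ℕ → ℝ) (j : ℕ) : ℝ := tau t j / tau t (j - 1)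

/-- Offset node `t_k^* = t_{k-1} + σ τ_k` with `σ = 1 - α/2`. -/
def tstar (α : ℝ) (t : ℕ → ℝ) (k : ℕ) : ℝ := t (k - 1) + (1 - α / 2) * tau t k

/-- L2-1_σ coefficient `a_j^k`. -/
def acoef (α : ℝ) (t : ℕ → ℝ) (j k : ℕ) : ℝ :=
  ∫ θ in (0:ℝ)..1,
    (-2 * tau t j * (1 - θ) - tau t (j + 1)) /
      ((tau t j + tau t (j + 1)) * (tstar α t k - (t (j - 1) + θ * tau t j)) ^ α)

/-- L2-1_σ coefficient `c_j^k`. -/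
def ccoef (α : ℝ) (t : ℕ → ℝ) (j k : ℕ) : ℝ :=
  ∫ θ in (0:ℝ)..1,
    (tau t j ^ 2 * (2 * θ - 1)) /
      (tau t (j + 1) * (tau t j + tau t (j + 1)) *
        (tstar α t k - (t (j - 1) + θ * tau t j)) ^ α)

/-- `d_j^k = c_{j-1}^k - a_j^k`. -/
def dcoef (α : ℝ) (t : ℕ → ℝ) (j k : ℕ) : ℝ := ccoef α t (j - 1) k - acoef α t j k

/-- The lower-triangular L2-1_σ matrix `M` (entries vanish above the diagonal and
for column index `0`). -/
def Mentry (α : ℝ) (t : ℕ → ℝ) (k j : ℕ) : ℝ :=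
  if j = 0 ∨ k < j then 0
  else if j = k then ccoef α t (k - 1) k + (1 - α / 2) ^ (1 - α) / ((1 - α) * tau t k ^ α)
  else if j = 1 then -acoef α t 1 k
  else dcoef α t j k

end

/-- (P2): `a_j^{k+1} - a_j^k > 0` for `k ≥ 2`, `1 ≤ j ≤ k-1`. -/
theorem acoef_diff_k_pos (α : ℝ) (hα : α ∈ Set.Ioo (0:ℝ) 1)
    (t : ℕ → ℝ) (ht0 : t 0 = 0) (hmono : StrictMono t)
    (k j : ℕ) (hk : 2 ≤ k) (hj1 : 1 ≤ j) (hj2 : j ≤ k - 1) :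
    acoef α t j (k + 1) - acoef α t j k > 0 := by
  obtain ⟨h0, h1⟩ := hα
  have htau : ∀ i, 1 ≤ i → 0 < tau t i := by
    intro i hi
    have := hmono (show i - 1 < i by omega)
    unfold tau
    linarith
  have hj := htau j hj1
  have hjs := htau (j + 1) (by omega)
  have hkk := htau k (by omega)
  have hks := htau (k + 1) (by omega)
  have hle : t j ≤ t (k - 1) := hmono.monotone hj2
  have hs : tstar α t k < tstar α t (k + 1) := by
    have e : t k = t (k - 1) + tau t k := by unfold tau; ring
    unfold tstar
    rw [Nat.add_sub_cancel, e]
    nlinarith [mul_pos h0 hkk, mul_pos (show 0 < 1 - α / 2 by linarith) hks]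
  have hp : t j < tstar α t k := by
    unfold tstar
    nlinarith [mul_pos (show 0 < 1 - α / 2 by linarith) hkk]
  have hb : ∀ θ ∈ Set.Icc (0:ℝ) 1, ∀ s, t j < s → 0 < s - (t (j - 1) + θ * tau t j) := by
    intro θ hθ s hs
    have e : t j = t (j - 1) + tau t j := by unfold tau; ring
    nlinarith [mul_nonneg (sub_nonneg.2 hθ.2) hj.le]
  have hc : ∀ s, t j < s → ContinuousOn (fun θ : ℝ =>
      (-2 * tau t j * (1 - θ) - tau t (j + 1)) /
      ((tau t j + tau t (j + 1)) * (s - (t (j - 1) + θ * tau t j)) ^ α)) (Set.Icc 0 1) := by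
    intro s hs
    apply ContinuousOn.div (by fun_prop)
    · apply ContinuousOn.mul (by fun_prop)
      apply ContinuousOn.rpow_const (by fun_prop)
      intro θ hθ
      exact Or.inl (hb θ hθ s hs).ne'
    · intro θ hθ
      have := Real.rpow_pos_of_pos (hb θ hθ s hs) α
      positivity
  have hlt : ∀ θ ∈ Set.Icc (0:ℝ) 1,
      (-2 * tau t j * (1 - θ) - tau t (j + 1)) /
      ((tau t j + tau t (j + 1)) * (tstar α t k - (t (j - 1) + θ * tau t j)) ^ α) <
      (-2 * tau t j * (1 - θ) - tau t (j + 1)) /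
      ((tau t j + tau t (j + 1)) * (tstar α t (k + 1) - (t (j - 1) + θ * tau t j)) ^ α) := by
    intro θ hθ
    have hb1 := hb θ hθ _ hp
    have hr1 := Real.rpow_pos_of_pos hb1 α
    have hr := Real.rpow_lt_rpow hb1.le (sub_lt_sub_right hs _) h0
    have hn : 0 < 2 * tau t j * (1 - θ) + tau t (j + 1) := by
      nlinarith [mul_nonneg (sub_nonneg.2 hθ.2) hj.le]
    have e : -2 * tau t j * (1 - θ) - tau t (j + 1)
      = -(2 * tau t j * (1 - θ) + tau t (j + 1)) := by ring
    rw [e, neg_div, neg_div, neg_lt_neg_iff]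
    exact div_lt_div_of_pos_left hn (by positivity)
      (mul_lt_mul_of_pos_left hr (by positivity))
  have := intervalIntegral.integral_lt_integral_of_continuousOn_of_le_of_exists_lt
    (zero_lt_one) (hc _ hp) (hc _ (hp.trans hs))
    (fun θ hθ => (hlt θ (Set.Ioc_subset_Icc_self hθ)).le)
    ⟨0, by simp, hlt 0 (by simp)⟩
  unfold acoef
  linarith
end

section
/- For every α ∈ (0,1), every nonuniform time mesh, and all indices k ≥ 3 and 1 ≤ j ≤ k−2, the L2-1_σ coefficients satisfy a_{j+1}^k − a_j^k < 0. -/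
open MeasureTheory Real Finset

lemma aux_w (p q C : ℝ) (hp : 0 < p) (hq : 0 < q) :
    ∫ θ in (0:ℝ)..1, (-2 * p * (1 - θ) - q) / ((p + q) * C) = -(1 / C) := by
  have h : ∀ θ ∈ Set.uIcc (0:ℝ) 1, HasDerivAt
      (fun θ : ℝ => (-2 * p * (θ - θ ^ 2 / 2) - q * θ) / ((p + q) * C))
      ((-2 * p * (1 - θ) - q) / ((p + q) * C)) θ := by
    intro θ _
    have h1 := (((hasDerivAt_id θ).sub (((hasDerivAt_id θ).pow 2).div_const 2)).const_mul
      (-2 * p)).sub ((hasDerivAt_id θ).const_mul q)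
    refine HasDerivAt.congr_deriv (h1.div_const ((p + q) * C)) ?_
    simp
  rw [intervalIntegral.integral_eq_sub_of_hasDerivAt h
    (Continuous.intervalIntegrable (by fun_prop) _ _)]
  have : p + q ≠ 0 := by positivity
  rcases eq_or_ne C 0 with rfl | hC
  · simp
  · field_simp
    ring

lemma aux_cont (α p q A : ℝ) (hp : 0 < p) (hq : 0 < q) (hA : p < A) :
    ContinuousOn (fun θ : ℝ => (-2 * p * (1 - θ) - q) / ((p + q) * (A - θ * p) ^ α))
      (Set.Icc 0 1) := by
  have hpos : ∀ θ ∈ Set.Icc (0:ℝ) 1, 0 < A - θ * p := by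
    intro θ hθ
    nlinarith [hθ.1, hθ.2]
  apply ContinuousOn.div (by fun_prop)
  · apply ContinuousOn.mul (by fun_prop)
    apply ContinuousOn.rpow_const (by fun_prop)
    intro θ hθ
    exact Or.inl (hpos θ hθ).ne'
  · intro θ hθ
    have := rpow_pos_of_pos (hpos θ hθ) α
    positivity

lemma aux_div (α p q θ x y : ℝ) (hα : 0 < α) (hp : 0 < p) (hq : 0 < q) (hθ : θ ≤ 1)
    (hx : 0 < x) (hxy : x ≤ y) :
    (-2 * p * (1 - θ) - q) / ((p + q) * x ^ α) ≤ (-2 * p * (1 - θ) - q) / ((p + q) * y ^ α) := by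
  have h1 := rpow_pos_of_pos hx α
  have h2 := rpow_le_rpow hx.le hxy hα.le
  have h3 : 0 ≤ 2 * p * (1 - θ) + q := by
    have : 0 ≤ 1 - θ := by linarith
    positivity
  have h4 : (2 * p * (1 - θ) + q) / ((p + q) * y ^ α) ≤
      (2 * p * (1 - θ) + q) / ((p + q) * x ^ α) := by gcongr
  have e : -2 * p * (1 - θ) - q = -(2 * p * (1 - θ) + q) := by ring
  rw [e, neg_div, neg_div]
  linarith

lemma aux_lower (α p q A : ℝ) (hα : 0 < α) (hp : 0 < p) (hq : 0 < q) (hA : p < A) :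
    -(1 / (A - p) ^ α) ≤
      ∫ θ in (0:ℝ)..1, (-2 * p * (1 - θ) - q) / ((p + q) * (A - θ * p) ^ α) := by
  rw [← aux_w p q _ hp hq]
  apply intervalIntegral.integral_mono_on zero_le_one
  · exact Continuous.intervalIntegrable (by fun_prop) _ _
  · apply ContinuousOn.intervalIntegrable_of_Icc zero_le_one
    exact aux_cont α p q A hp hq hA
  · intro θ hθ
    exact aux_div α p q θ _ _ hα hp hq hθ.2 (by linarith) (by nlinarith [hθ.1, hθ.2])

lemma aux_upper (α p q A : ℝ) (hα : 0 < α) (hp : 0 < p) (hq : 0 < q) (hA : p < A) :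
    ∫ θ in (0:ℝ)..1, (-2 * p * (1 - θ) - q) / ((p + q) * (A - θ * p) ^ α) < -(1 / A ^ α) := by
  rw [← aux_w p q _ hp hq]
  apply intervalIntegral.integral_lt_integral_of_continuousOn_of_le_of_exists_lt zero_lt_one
  · exact aux_cont α p q A hp hq hA
  · fun_prop
  · intro θ hθ
    exact aux_div α p q θ _ _ hα hp hq hθ.2 (by nlinarith [hθ.1, hθ.2]) (by nlinarith [hθ.1, hθ.2])
  · refine ⟨1, by simp, ?_⟩
    have hx : 0 < A - 1 * p := by linarith
    have h1 := rpow_pos_of_pos hx α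
    have h2 : (A - 1 * p) ^ α < A ^ α := rpow_lt_rpow hx.le (by linarith) hα
    have h4 : q / ((p + q) * A ^ α) < q / ((p + q) * (A - 1 * p) ^ α) := by gcongr
    have e : -2 * p * (1 - 1) - q = -q := by ring
    rw [e, neg_div, neg_div]
    linarith

/-- (P3): `a_{j+1}^k - a_j^k < 0` for `k ≥ 3`, `1 ≤ j ≤ k-2`. -/
theorem acoef_diff_j_neg (α : ℝ) (hα : α ∈ Set.Ioo (0:ℝ) 1)
    (t : ℕ → ℝ) (ht0 : t 0 = 0) (hmono : StrictMono t)
    (k j : ℕ) (hk : 3 ≤ k) (hj1 : 1 ≤ j) (hj2 : j ≤ k - 2) :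
    acoef α t (j + 1) k - acoef α t j k < 0 := by
  have hα0 := hα.1
  have hα1 := hα.2
  have hτ : ∀ i, 1 ≤ i → 0 < tau t i := by
    intro i hi
    unfold tau
    have := hmono (show i - 1 < i by omega)
    linarith
  have hT : t (j + 1) < tstar α t k := by
    have h1 : t (j + 1) ≤ t (k - 1) := hmono.monotone (by omega)
    have h2 : 0 < (1 - α / 2) * tau t k := mul_pos (by linarith) (hτ k (by omega))
    unfold tstar
    linarith
  have hjj : t j < t (j + 1) := hmono (by omega)
  have e1 : tau t j = t j - t (j - 1) := rfl
  have e2 : tau t (j + 1) = t (j + 1) - t j := rfl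
  have hl := aux_lower α (tau t j) (tau t (j + 1)) (tstar α t k - t (j - 1)) hα0
    (hτ _ hj1) (hτ _ (by omega)) (by linarith)
  have hu := aux_upper α (tau t (j + 1)) (tau t (j + 1 + 1)) (tstar α t k - t j) hα0
    (hτ _ (by omega)) (hτ _ (by omega)) (by linarith)
  have e3 : tstar α t k - t (j - 1) - tau t j = tstar α t k - t j := by rw [e1]; ring
  rw [e3] at hl
  unfold acoef
  simp only [Nat.add_sub_cancel, ← sub_sub]
  linarith
end

section
/- For every α ∈ (0,1), every nonuniform time mesh, and all indices k ≥ 3 and 1 ≤ j ≤ k−2, the L2-1_σ coefficients satisfy a_{j+1}^k − a_j^k < a_{j+1}^{k+1} − a_j^{k+1}. -/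
open MeasureTheory Real Finset

/-- Difference of two kernels is strictly increasing. -/
lemma kern_diff_lt {α A B s s' : ℝ} (hα : 0 < α) (hAB : A < B) (hs : s < s') (hs' : s' < A) :
    (A - s) ^ (-α) - (B - s) ^ (-α) < (A - s') ^ (-α) - (B - s') ^ (-α) := by
  have hd : ∀ x ∈ Set.Iio A, HasDerivAt (fun x : ℝ => (A - x) ^ (-α) - (B - x) ^ (-α))
      (α * ((A - x) ^ (-α - 1) - (B - x) ^ (-α - 1))) x := by
    intro x hx
    have hx' : x < A := hx
    have h1 : HasDerivAt (fun x : ℝ => A - x) (-1) x := by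
      simpa using (hasDerivAt_id x).const_sub A
    have h2 : HasDerivAt (fun x : ℝ => B - x) (-1) x := by
      simpa using (hasDerivAt_id x).const_sub B
    have h3 := h1.rpow_const (p := -α) (Or.inl (by intro h; linarith : A - x ≠ 0) )
    have h4 := h2.rpow_const (p := -α) (Or.inl (by intro h; linarith : B - x ≠ 0) )
    refine (h3.sub h4).congr_deriv ?_
    ring
  have hm : StrictMonoOn (fun x : ℝ => (A - x) ^ (-α) - (B - x) ^ (-α)) (Set.Iio A) := by
    apply strictMonoOn_of_deriv_pos (convex_Iio A)
    · intro x hx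
      exact (hd x hx).continuousAt.continuousWithinAt
    · intro x hx
      rw [interior_Iio] at hx
      rw [(hd x hx).deriv]
      have hx' : x < A := hx
      have := Real.rpow_lt_rpow_of_neg (x := A - x) (y := B - x) (z := -α - 1)
        (by linarith) (by linarith) (by linarith)
      exact mul_pos hα (by linarith)
  exact hm (hs.trans hs') hs' hs

/-- Rewriting of the shifted difference as a single weighted integral. -/
lemma coef_integral {α A B p q b : ℝ} (c : ℝ) (hp : 0 < p) (hq : 0 < q)
    (hAB : A < B) (hb : b + p < A) :
    ContinuousOn (fun θ : ℝ => (2 * p * (1 - θ) + q) / (p + q) *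
        (c - ((A - (b + θ * p)) ^ (-α) - (B - (b + θ * p)) ^ (-α)))) (Set.Icc 0 1) ∧
    (∫ θ in (0:ℝ)..1, (2 * p * (1 - θ) + q) / (p + q) *
        (c - ((A - (b + θ * p)) ^ (-α) - (B - (b + θ * p)) ^ (-α)))) =
    c + ((∫ θ in (0:ℝ)..1, (-2 * p * (1 - θ) - q) / ((p + q) * (A - (b + θ * p)) ^ α)) -
      ∫ θ in (0:ℝ)..1, (-2 * p * (1 - θ) - q) / ((p + q) * (B - (b + θ * p)) ^ α)) := by
  have hpos : ∀ C, A ≤ C → ∀ θ ∈ Set.Icc (0:ℝ) 1, 0 < C - (b + θ * p) := by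
    intro C hC θ hθ
    nlinarith [hθ.1, hθ.2]
  have hcr : ∀ C, A ≤ C → ∀ r : ℝ, ContinuousOn (fun θ : ℝ => (C - (b + θ * p)) ^ r)
      (Set.Icc 0 1) := by
    intro C hC r
    apply ContinuousOn.rpow_const (by fun_prop)
    intro θ hθ
    exact Or.inl (hpos C hC θ hθ).ne'
  have hw : ContinuousOn (fun θ : ℝ => (2 * p * (1 - θ) + q) / (p + q)) (Set.Icc 0 1) := by
    fun_prop
  have hi : ∀ C, A ≤ C → IntervalIntegrable
      (fun θ : ℝ => (-2 * p * (1 - θ) - q) / ((p + q) * (C - (b + θ * p)) ^ α)) volume 0 1 := by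
    intro C hC
    apply ContinuousOn.intervalIntegrable
    rw [Set.uIcc_of_le zero_le_one]
    apply ContinuousOn.div (by fun_prop) (continuousOn_const.mul (hcr C hC α))
    intro θ hθ
    have := Real.rpow_pos_of_pos (hpos C hC θ hθ) α
    exact (mul_pos (add_pos hp hq) this).ne'
  refine ⟨hw.mul (continuousOn_const.sub ((hcr A le_rfl _).sub (hcr B hAB.le _))), ?_⟩
  have hc : (∫ θ in (0:ℝ)..1, (2 * p * (1 - θ) + q) / (p + q) * c) = c := by
    have hd : ∀ θ ∈ Set.uIcc (0:ℝ) 1, HasDerivAt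
        (fun θ : ℝ => (2 * p * (θ - θ ^ 2 / 2) + q * θ) / (p + q) * c)
        ((2 * p * (1 - θ) + q) / (p + q) * c) θ := by
      intro θ _
      have h := (((((hasDerivAt_id θ).sub (((hasDerivAt_id θ).pow 2).div_const 2)).const_mul
        (2 * p)).add ((hasDerivAt_id θ).const_mul q)).div_const (p + q)).mul_const c
      refine h.congr_deriv ?_
      simp
    rw [intervalIntegral.integral_eq_sub_of_hasDerivAt hd
      (Continuous.intervalIntegrable (by fun_prop) _ _)]
    have : p + q ≠ 0 := by positivity
    field_simp
    ring
  have hci : IntervalIntegrable (fun θ : ℝ => (2 * p * (1 - θ) + q) / (p + q) * c) volume 0 1 :=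
    Continuous.intervalIntegrable (by fun_prop) _ _
  conv_rhs => rw [← hc]
  rw [← intervalIntegral.integral_sub (hi A le_rfl) (hi B hAB.le),
    ← intervalIntegral.integral_add hci ((hi A le_rfl).sub (hi B hAB.le))]
  apply intervalIntegral.integral_congr
  intro θ hθ
  rw [Set.uIcc_of_le zero_le_one] at hθ
  have h1 := hpos A le_rfl θ hθ
  have h2 := hpos B hAB.le θ hθ
  have h3 := Real.rpow_pos_of_pos h1 α
  have h4 := Real.rpow_pos_of_pos h2 α
  simp only
  rw [Real.rpow_neg h1.le, Real.rpow_neg h2.le]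
  field_simp
  ring

lemma coef_lower {α A B p q b : ℝ} (hα : 0 < α) (hp : 0 < p) (hq : 0 < q)
    (hAB : A < B) (hb : b + p < A) :
    0 < ((A - (b + p)) ^ (-α) - (B - (b + p)) ^ (-α)) +
    ((∫ θ in (0:ℝ)..1, (-2 * p * (1 - θ) - q) / ((p + q) * (A - (b + θ * p)) ^ α)) -
      ∫ θ in (0:ℝ)..1, (-2 * p * (1 - θ) - q) / ((p + q) * (B - (b + θ * p)) ^ α)) := by
  obtain ⟨hc, he⟩ := coef_integral (α := α)
    ((A - (b + p)) ^ (-α) - (B - (b + p)) ^ (-α)) hp hq hAB hb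
  rw [← he]
  apply intervalIntegral.intervalIntegral_pos_of_pos_on _ _ zero_lt_one
  · apply ContinuousOn.intervalIntegrable
    rwa [Set.uIcc_of_le zero_le_one]
  · intro θ hθ
    have h1 : 0 < 1 - θ := by linarith [hθ.2]
    have := kern_diff_lt (s := b + θ * p) (s' := b + p) hα hAB (by nlinarith) hb
    exact mul_pos (by positivity) (by linarith)

lemma coef_upper {α A B p q b : ℝ} (hα : 0 < α) (hp : 0 < p) (hq : 0 < q)
    (hAB : A < B) (hb : b + p < A) :
    ((A - b) ^ (-α) - (B - b) ^ (-α)) +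
    ((∫ θ in (0:ℝ)..1, (-2 * p * (1 - θ) - q) / ((p + q) * (A - (b + θ * p)) ^ α)) -
      ∫ θ in (0:ℝ)..1, (-2 * p * (1 - θ) - q) / ((p + q) * (B - (b + θ * p)) ^ α)) < 0 := by
  obtain ⟨hc, he⟩ := coef_integral (α := α) ((A - b) ^ (-α) - (B - b) ^ (-α)) hp hq hAB hb
  rw [← he, ← neg_pos, ← intervalIntegral.integral_neg]
  apply intervalIntegral.intervalIntegral_pos_of_pos_on _ _ zero_lt_one
  · apply ContinuousOn.intervalIntegrable
    rw [Set.uIcc_of_le zero_le_one]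
    exact hc.neg
  · intro θ hθ
    have h1 : 0 < 1 - θ := by linarith [hθ.2]
    have h0 : 0 < θ := hθ.1
    have := kern_diff_lt (s := b) (s' := b + θ * p) hα hAB (by nlinarith) (by nlinarith)
    rw [neg_pos]
    exact mul_neg_of_pos_of_neg (by positivity) (by linarith)

/-- (P4): `a_{j+1}^k - a_j^k < a_{j+1}^{k+1} - a_j^{k+1}` for `k ≥ 3`, `1 ≤ j ≤ k-2`. -/
theorem acoef_second_diff (α : ℝ) (hα : α ∈ Set.Ioo (0:ℝ) 1)
    (t : ℕ → ℝ) (ht0 : t 0 = 0) (hmono : StrictMono t)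
    (k j : ℕ) (hk : 3 ≤ k) (hj1 : 1 ≤ j) (hj2 : j ≤ k - 2) :
    acoef α t (j + 1) k - acoef α t j k
      < acoef α t (j + 1) (k + 1) - acoef α t j (k + 1) := by
  obtain ⟨h0, h1⟩ := hα
  have htau : ∀ i, 1 ≤ i → 0 < tau t i := by
    intro i hi
    exact sub_pos.2 (hmono (by omega))
  have hA : t (k - 1) < tstar α t k := by
    have := mul_pos (by linarith : 0 < 1 - α / 2) (htau k (by omega))
    unfold tstar
    linarith
  have hAB : tstar α t k < tstar α t (k + 1) := by
    have e1 := mul_pos (by linarith : 0 < 1 - α / 2) (htau (k + 1) (by omega))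
    have e2 := mul_pos (by linarith : 0 < α / 2) (htau k (by omega))
    have e3 : tau t k = t k - t (k - 1) := rfl
    unfold tstar
    simp only [Nat.add_sub_cancel]
    linarith
  have hle : t (j + 1) ≤ t (k - 1) := hmono.monotone (by omega)
  have hlt : t j < t (j + 1) := hmono (by omega)
  have ej : t (j - 1) + tau t j = t j := by unfold tau; ring
  have ej1 : t j + tau t (j + 1) = t (j + 1) := by
    unfold tau; simp only [Nat.add_sub_cancel]; ring
  have L := coef_lower (b := t (j - 1)) h0 (htau j hj1) (htau (j + 1) (by omega)) hAB
    (by linarith)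
  have U := coef_upper (b := t j) h0 (htau (j + 1) (by omega)) (htau (j + 1 + 1) (by omega)) hAB
    (by linarith)
  rw [ej] at L
  unfold acoef
  simp only [Nat.add_sub_cancel]
  linarith
end

section
/- For every α ∈ (0,1), every nonuniform time mesh, and all indices k ≥ 2 and 1 ≤ j ≤ k−1, the L2-1_σ coefficient c_j^k is strictly positive: c_j^k > 0. -/
open MeasureTheory Real Finset

/-- (P5): `c_j^k > 0` for `k ≥ 2`, `1 ≤ j ≤ k-1`. -/
theorem ccoef_pos (α : ℝ) (hα : α ∈ Set.Ioo (0:ℝ) 1)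
    (t : ℕ → ℝ) (ht0 : t 0 = 0) (hmono : StrictMono t)
    (k j : ℕ) (hk : 2 ≤ k) (hj1 : 1 ≤ j) (hj2 : j ≤ k - 1) :
    ccoef α t j k > 0 := by
  have hα0 := hα.1
  have hα1 := hα.2
  have hτ : 0 < tau t j := by
    unfold tau
    have := hmono (show j - 1 < j by omega)
    linarith
  have hτ' : 0 < tau t (j + 1) := by
    unfold tau
    have := hmono (show j + 1 - 1 < j + 1 by omega)
    linarith
  have hτk : 0 < tau t k := by
    unfold tau
    have := hmono (show k - 1 < k by omega)
    linarith
  have hA : tau t j < tstar α t k - t (j - 1) := by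
    have h1 := hmono.monotone hj2
    have h2 : 0 < (1 - α / 2) * tau t k := mul_pos (by linarith) hτk
    unfold tstar
    have h3 : tau t j = t j - t (j - 1) := rfl
    linarith
  unfold ccoef
  generalize tstar α t k = S at *
  generalize t (j - 1) = b at *
  generalize tau t j = p at *
  generalize tau t (j + 1) = q at *
  have hg : ∀ θ ∈ Set.Icc (0:ℝ) 1, 0 < S - (b + θ * p) := by
    intro θ hθ
    nlinarith [hθ.1, hθ.2]
  have hD : 0 < q * (p + q) := by positivity
  have hhalf : (1/2 : ℝ) ∈ Set.Icc (0:ℝ) 1 := by constructor <;> norm_num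
  have h0 : ∫ θ in (0:ℝ)..1, (p ^ 2 * (2 * θ - 1)) /
      (q * (p + q) * (S - (b + (1/2) * p)) ^ α) = 0 := by
    rw [intervalIntegral.integral_div, intervalIntegral.integral_const_mul,
      intervalIntegral.integral_sub (Continuous.intervalIntegrable (by fun_prop) _ _) (by simp),
      intervalIntegral.integral_const_mul, integral_id]
    norm_num
  have hWh : 0 < q * (p + q) * (S - (b + (1/2) * p)) ^ α :=
    mul_pos hD (Real.rpow_pos_of_pos (hg _ hhalf) _)
  refine lt_of_eq_of_lt h0.symm ?_
  apply intervalIntegral.integral_lt_integral_of_continuousOn_of_le_of_exists_lt one_pos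
  · fun_prop
  · apply ContinuousOn.div (by fun_prop)
    · apply ContinuousOn.mul (by fun_prop)
      apply ContinuousOn.rpow_const (by fun_prop)
      intro θ hθ
      exact Or.inl (hg θ hθ).ne'
    · intro θ hθ
      exact (mul_pos hD (Real.rpow_pos_of_pos (hg _ hθ) _)).ne'
  · intro θ hθ'
    have hθ : θ ∈ Set.Icc (0:ℝ) 1 := ⟨hθ'.1.le, hθ'.2⟩
    have hW : 0 < q * (p + q) * (S - (b + θ * p)) ^ α :=
      mul_pos hD (Real.rpow_pos_of_pos (hg _ hθ) _)
    rw [div_le_div_iff₀ hWh hW]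
    rcases le_total θ (1/2) with h | h
    · have h1 : (S - (b + (1/2) * p)) ^ α ≤ (S - (b + θ * p)) ^ α :=
        Real.rpow_le_rpow (hg _ hhalf).le (by nlinarith) hα0.le
      have h2 := mul_le_mul_of_nonneg_left h1 hD.le
      exact mul_le_mul_of_nonpos_left h2
        (mul_nonpos_of_nonneg_of_nonpos (by positivity) (by linarith))
    · have h1 : (S - (b + θ * p)) ^ α ≤ (S - (b + (1/2) * p)) ^ α :=
        Real.rpow_le_rpow (hg _ hθ).le (by nlinarith) hα0.le
      have h2 := mul_le_mul_of_nonneg_left h1 hD.le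
      exact mul_le_mul_of_nonneg_left h2
        (mul_nonneg (by positivity) (by linarith))
  · have h1m : (1 : ℝ) ∈ Set.Icc (0:ℝ) 1 := by constructor <;> norm_num
    refine ⟨1, h1m, ?_⟩
    have hW : 0 < q * (p + q) * (S - (b + 1 * p)) ^ α :=
      mul_pos hD (Real.rpow_pos_of_pos (hg _ h1m) _)
    rw [div_lt_div_iff₀ hWh hW]
    have h1 : (S - (b + 1 * p)) ^ α < (S - (b + (1/2) * p)) ^ α :=
      Real.rpow_lt_rpow (hg _ h1m).le (by linarith) hα0
    have h2 := mul_lt_mul_of_pos_left h1 hD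
    exact mul_lt_mul_of_pos_left h2 (mul_pos (by positivity) (by norm_num))
end

section
/- For every α ∈ (0,1), every nonuniform time mesh, and all indices k ≥ 2 and 1 ≤ j ≤ k−1, the L2-1_σ coefficients satisfy c_j^{k+1} − c_j^k < 0. -/
open MeasureTheory Real Finset

lemma aux_int (h : ℝ → ℝ) (hc : ContinuousOn h (Set.Icc 0 1))
    (hm : StrictMonoOn h (Set.Icc 0 1)) :
    0 < ∫ θ in (0:ℝ)..1, (2 * θ - 1) * h θ := by
  have hc1 : ContinuousOn (fun θ : ℝ => (2 * θ - 1) * (h θ - h (1/2))) (Set.Icc 0 1) := by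
    fun_prop
  have hc2 : ContinuousOn (fun θ : ℝ => (2 * θ - 1) * h (1/2)) (Set.Icc 0 1) := by
    fun_prop
  have hh : (1/2 : ℝ) ∈ Set.Icc (0:ℝ) 1 := by norm_num
  have key : 0 < ∫ θ in (0:ℝ)..1, (2 * θ - 1) * (h θ - h (1/2)) := by
    apply intervalIntegral.integral_pos one_pos hc1
    · intro x hx
      have hx' : x ∈ Set.Icc (0:ℝ) 1 := ⟨hx.1.le, hx.2⟩
      rcases le_total x (1/2) with h1 | h1
      · have := hm.monotoneOn hx' hh h1
        exact mul_nonneg_of_nonpos_of_nonpos (by linarith) (by linarith)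
      · have := hm.monotoneOn hh hx' h1
        exact mul_nonneg (by linarith) (by linarith)
    · refine ⟨1, by norm_num, ?_⟩
      have := hm hh (by norm_num : (1:ℝ) ∈ Set.Icc (0:ℝ) 1) (by norm_num)
      have h3 : 0 < h 1 - h (1/2) := by linarith
      norm_num at h3 ⊢
      exact h3
  have e : (∫ θ in (0:ℝ)..1, (2 * θ - 1) * h θ)
      = (∫ θ in (0:ℝ)..1, (2 * θ - 1) * (h θ - h (1/2)))
        + ∫ θ in (0:ℝ)..1, (2 * θ - 1) * h (1/2) := by
    rw [← intervalIntegral.integral_add]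
    · congr 1; ext θ; ring
    · exact ContinuousOn.intervalIntegrable_of_Icc zero_le_one hc1
    · exact ContinuousOn.intervalIntegrable_of_Icc zero_le_one hc2
  have z : (∫ θ in (0:ℝ)..1, (2 * θ - 1) * h (1/2)) = 0 := by
    rw [intervalIntegral.integral_mul_const, intervalIntegral.integral_sub
      (Continuous.intervalIntegrable (by fun_prop) _ _)
      (Continuous.intervalIntegrable (by fun_prop) _ _),
      intervalIntegral.integral_const_mul, integral_id]
    norm_num
  rw [e, z, add_zero]; exact key

lemma aux_anti (α d : ℝ) (hα : 0 < α) (hd : 0 < d) :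
    StrictAntiOn (fun s : ℝ => s ^ (-α) - (s + d) ^ (-α)) (Set.Ioi 0) := by
  have hder : ∀ s ∈ Set.Ioi (0:ℝ), HasDerivAt (fun s : ℝ => s ^ (-α) - (s + d) ^ (-α))
      (-α * s ^ (-α - 1) - -α * (s + d) ^ (-α - 1)) s := by
    intro s hs
    have hs : 0 < s := hs
    have h1 := Real.hasDerivAt_rpow_const (x := s) (p := -α) (Or.inl hs.ne')
    have h2 := Real.hasDerivAt_rpow_const (x := s + d) (p := -α) (Or.inl (by positivity))
    exact h1.sub (h2.comp_add_const s d)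
  apply strictAntiOn_of_deriv_neg (convex_Ioi 0)
  · exact fun s hs => (hder s hs).continuousAt.continuousWithinAt
  · intro s hs
    rw [interior_Ioi] at hs
    rw [(hder s hs).deriv]
    have hs : 0 < s := hs
    have := Real.rpow_lt_rpow_of_neg hs (by linarith : s < s + d) (by linarith : -α - 1 < 0)
    nlinarith

/-- (P6): `c_j^{k+1} - c_j^k < 0` for `k ≥ 2`, `1 ≤ j ≤ k-1`. -/
theorem ccoef_diff_k_neg (α : ℝ) (hα : α ∈ Set.Ioo (0:ℝ) 1)
    (t : ℕ → ℝ) (ht0 : t 0 = 0) (hmono : StrictMono t)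
    (k j : ℕ) (hk : 2 ≤ k) (hj1 : 1 ≤ j) (hj2 : j ≤ k - 1) :
    ccoef α t j (k + 1) - ccoef α t j k < 0 := by
  obtain ⟨ha0, ha1⟩ := hα
  have m1 : t (j - 1) < t j := hmono (by omega)
  have m2 : t j < t (j + 1) := hmono (by omega)
  have m3 : t j ≤ t (k - 1) := hmono.monotone hj2
  have m4 : t (k - 1) < t k := hmono (by omega)
  have m5 : t k < t (k + 1) := hmono (by omega)
  have hτ : 0 < tau t j := by unfold tau; linarith
  have hτ' : 0 < tau t (j + 1) := by
    simp only [tau, Nat.add_sub_cancel]; linarith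
  have hA : t j < tstar α t k := by
    unfold tstar tau; nlinarith
  have hAB : tstar α t k < tstar α t (k + 1) := by
    simp only [tstar, tau, Nat.add_sub_cancel]; nlinarith
  have ej : tau t j = t j - t (j - 1) := rfl
  unfold ccoef
  generalize tstar α t (k + 1) = B at *
  generalize tstar α t k = A at *
  generalize tau t (j + 1) = τ' at *
  generalize tau t j = τ at *
  generalize t (j - 1) = u at *
  have hpos : ∀ θ ∈ Set.Icc (0:ℝ) 1, 0 < A - (u + θ * τ) := by
    intro θ hθ
    have := mul_le_mul_of_nonneg_right hθ.2 hτ.le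
    linarith
  have hposB : ∀ θ ∈ Set.Icc (0:ℝ) 1, 0 < B - (u + θ * τ) := by
    intro θ hθ
    have := hpos θ hθ
    linarith
  have hcont : ∀ D : ℝ, (∀ θ ∈ Set.Icc (0:ℝ) 1, 0 < D - (u + θ * τ)) →
      ContinuousOn (fun θ : ℝ => (D - (u + θ * τ)) ^ (-α)) (Set.Icc 0 1) := by
    intro D hD
    exact ContinuousOn.rpow_const (by fun_prop) (fun x hx => Or.inl (hD x hx).ne')
  have hform : ∀ D : ℝ, (∀ θ ∈ Set.Icc (0:ℝ) 1, 0 < D - (u + θ * τ)) →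
      (∫ θ in (0:ℝ)..1, (τ ^ 2 * (2 * θ - 1)) / (τ' * (τ + τ') * (D - (u + θ * τ)) ^ α))
      = (τ ^ 2 / (τ' * (τ + τ'))) * ∫ θ in (0:ℝ)..1, (2 * θ - 1) * (D - (u + θ * τ)) ^ (-α) := by
    intro D hD
    rw [← intervalIntegral.integral_const_mul]
    apply intervalIntegral.integral_congr
    intro θ hθ
    rw [Set.uIcc_of_le zero_le_one] at hθ
    have h0 := hD θ hθ
    have h1 := Real.rpow_pos_of_pos h0 α
    simp only
    rw [Real.rpow_neg h0.le]
    field_simp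
  rw [hform A hpos, hform B hposB, ← mul_sub]
  have hC : 0 < τ ^ 2 / (τ' * (τ + τ')) := by positivity
  apply mul_neg_of_pos_of_neg hC
  have cA := hcont A hpos
  have cB := hcont B hposB
  have main := aux_int (fun θ => (A - (u + θ * τ)) ^ (-α) - (B - (u + θ * τ)) ^ (-α))
    (cA.sub cB) (by
      intro x hx y hy hxy
      have := aux_anti α (B - A) ha0 (by linarith) (hpos y hy) (hpos x hx) (by nlinarith)
      simp only at this ⊢
      have e1 : ∀ z : ℝ, A - (u + z * τ) + (B - A) = B - (u + z * τ) := fun z => by ring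
      rw [e1, e1] at this
      exact this)
  simp only [mul_sub] at main
  have lin : ContinuousOn (fun θ : ℝ => 2 * θ - 1) (Set.Icc 0 1) := by fun_prop
  have iA : IntervalIntegrable (fun θ : ℝ => (2 * θ - 1) * (A - (u + θ * τ)) ^ (-α)) volume 0 1 :=
    ContinuousOn.intervalIntegrable_of_Icc zero_le_one (lin.mul cA)
  have iB : IntervalIntegrable (fun θ : ℝ => (2 * θ - 1) * (B - (u + θ * τ)) ^ (-α)) volume 0 1 :=
    ContinuousOn.intervalIntegrable_of_Icc zero_le_one (lin.mul cB)
  rw [intervalIntegral.integral_sub iA iB] at main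
  linarith
end

section
/- For every α ∈ (0,1), every nonuniform time mesh, and all indices k ≥ 3 and 2 ≤ j ≤ k−1, the quantity d_j^k = c_{j−1}^k − a_j^k is strictly positive: d_j^k > 0. -/
open MeasureTheory Real Finset

theorem aux_c (α B b τ K : ℝ) (hα : 0 < α) (hτ : 0 < τ) (hB : 0 < B - (b + τ)) (hK : 0 < K) :
    0 ≤ ∫ θ in (0:ℝ)..1, (τ ^ 2 * (2 * θ - 1)) / (K * (B - (b + θ * τ)) ^ α) := by
  have hpos : ∀ θ ∈ Set.Icc (0:ℝ) 1, 0 < B - (b + θ * τ) := by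
    intro θ hθ
    nlinarith [hθ.1, hθ.2]
  have hm := hpos (1/2) ⟨by norm_num, by norm_num⟩
  set C : ℝ := K * (B - (b + 1/2 * τ)) ^ α with hC
  have hCpos : 0 < C := mul_pos hK (Real.rpow_pos_of_pos hm _)
  have h0 : ∫ θ in (0:ℝ)..1, (τ ^ 2 * (2 * θ - 1)) / C = 0 := by
    rw [intervalIntegral.integral_div, intervalIntegral.integral_const_mul]
    have : ∫ θ in (0:ℝ)..1, (2 * θ - 1) = 0 := by
      rw [intervalIntegral.integral_sub
        (Continuous.intervalIntegrable (by fun_prop) _ _)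
        (Continuous.intervalIntegrable (by fun_prop) _ _),
        intervalIntegral.integral_const_mul, integral_id]
      norm_num
    rw [this]; simp
  refine h0.symm.le.trans ?_
  apply intervalIntegral.integral_mono_on (by norm_num)
  · apply Continuous.intervalIntegrable
    fun_prop
  · apply ContinuousOn.intervalIntegrable
    rw [Set.uIcc_of_le (by norm_num)]
    refine ContinuousOn.div (by fun_prop) ?_ ?_
    · refine continuousOn_const.mul (ContinuousOn.rpow_const (by fun_prop) ?_)
      intro θ hθ
      exact Or.inl (hpos θ hθ).ne'
    · intro θ hθ
      exact (mul_pos hK (Real.rpow_pos_of_pos (hpos θ hθ) _)).ne'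
  · intro θ hθ
    have hD := mul_pos hK (Real.rpow_pos_of_pos (hpos θ hθ) α)
    rw [div_le_div_iff₀ hCpos hD]
    have hsq : 0 < τ ^ 2 := by positivity
    rcases le_total θ (1/2) with h | h
    · have : C ≤ K * (B - (b + θ * τ)) ^ α := by
        apply mul_le_mul_of_nonneg_left _ hK.le
        apply Real.rpow_le_rpow hm.le _ hα.le
        nlinarith
      apply mul_le_mul_of_nonpos_left this
      nlinarith
    · have : K * (B - (b + θ * τ)) ^ α ≤ C := by
        apply mul_le_mul_of_nonneg_left _ hK.le
        apply Real.rpow_le_rpow (hpos θ hθ).le _ hα.le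
        nlinarith
      apply mul_le_mul_of_nonneg_left this
      nlinarith

theorem aux_a (α B b τ τ' : ℝ) (hτ : 0 < τ) (hτ' : 0 < τ') (hB : 0 < B - (b + τ)) :
    ∫ θ in (0:ℝ)..1, (-2 * τ * (1 - θ) - τ') / ((τ + τ') * (B - (b + θ * τ)) ^ α) < 0 := by
  have hpos : ∀ θ ∈ Set.Icc (0:ℝ) 1, 0 < B - (b + θ * τ) := by
    intro θ hθ
    nlinarith [hθ.1, hθ.2]
  rw [← neg_pos, ← intervalIntegral.integral_neg]
  apply intervalIntegral.intervalIntegral_pos_of_pos_on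
  · apply ContinuousOn.intervalIntegrable
    rw [Set.uIcc_of_le (by norm_num)]
    refine ContinuousOn.neg (ContinuousOn.div (by fun_prop) ?_ ?_)
    · refine continuousOn_const.mul (ContinuousOn.rpow_const (by fun_prop) ?_)
      intro θ hθ
      exact Or.inl (hpos θ hθ).ne'
    · intro θ hθ
      exact (mul_pos (by linarith) (Real.rpow_pos_of_pos (hpos θ hθ) _)).ne'
  · intro θ hθ
    rw [neg_pos]
    apply div_neg_of_neg_of_pos
    · nlinarith [hθ.2]
    · exact mul_pos (by linarith) (Real.rpow_pos_of_pos (hpos θ ⟨hθ.1.le, hθ.2.le⟩) _)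
  · norm_num

/-- (P7): `d_j^k = c_{j-1}^k - a_j^k > 0` for `k ≥ 3`, `2 ≤ j ≤ k-1`. -/
theorem dcoef_pos (α : ℝ) (hα : α ∈ Set.Ioo (0:ℝ) 1)
    (t : ℕ → ℝ) (ht0 : t 0 = 0) (hmono : StrictMono t)
    (k j : ℕ) (hk : 3 ≤ k) (hj1 : 2 ≤ j) (hj2 : j ≤ k - 1) :
    dcoef α t j k > 0 := by
  obtain ⟨hα0, hα1⟩ := hα
  have htau : ∀ i, 1 ≤ i → 0 < tau t i := fun i hi => sub_pos.2 (hmono (by omega))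
  have hstar : t (k - 1) < tstar α t k := by
    have : 0 < (1 - α / 2) * tau t k := mul_pos (by linarith) (htau k (by omega))
    unfold tstar
    linarith
  have key : ∀ i, i ≤ k - 1 → 0 < tstar α t k - (t (i - 1) + tau t i) := by
    intro i hi
    have h1 : t i ≤ t (k - 1) := hmono.monotone hi
    unfold tau
    linarith
  have hc : 0 ≤ ccoef α t (j - 1) k :=
    aux_c α _ _ _ _ hα0 (htau (j - 1) (by omega)) (key (j - 1) (by omega))
      (mul_pos (htau _ (by omega)) (add_pos (htau _ (by omega)) (htau _ (by omega))))
  have ha : acoef α t j k < 0 :=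
    aux_a α _ _ _ _ (htau j (by omega)) (htau (j + 1) (by omega)) (key j hj2)
  unfold dcoef
  linarith
end

section
/- For every α ∈ (0,1), every nonuniform time mesh, and all indices k ≥ 3 and 2 ≤ j ≤ k−1, the quantities d_j^k = c_{j−1}^k − a_j^k satisfy d_j^{k+1} − d_j^k < 0. -/
open MeasureTheory Real Finset

/-- `x ↦ (x+δ)^(-α) - x^(-α)` is monotone on `(0,∞)`. -/
lemma aux_mono (α δ : ℝ) (hα : 0 < α) (hδ : 0 < δ) :
    MonotoneOn (fun x : ℝ => (x + δ) ^ (-α) - x ^ (-α)) (Set.Ioi 0) := by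
  have hd : ∀ x ∈ Set.Ioi (0:ℝ), HasDerivAt (fun x : ℝ => (x + δ) ^ (-α) - x ^ (-α))
      (1 * (-α) * (x + δ) ^ (-α - 1) - 1 * (-α) * x ^ (-α - 1)) x := by
    intro x hx
    have hx' : 0 < x := hx
    exact (((hasDerivAt_id x).add_const δ).rpow_const (Or.inl (by simp; positivity))).sub
      ((hasDerivAt_id x).rpow_const (Or.inl (by simpa using hx'.ne')))
  apply monotoneOn_of_deriv_nonneg (convex_Ioi 0)
  · intro x hx
    exact (hd x hx).continuousAt.continuousWithinAt
  · intro x hx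
    rw [interior_Ioi] at hx
    exact (hd x hx).differentiableAt.differentiableWithinAt
  · intro x hx
    rw [interior_Ioi] at hx
    rw [(hd x hx).deriv]
    have hx' : 0 < x := hx
    have h : (x + δ) ^ (-α - 1) ≤ x ^ (-α - 1) :=
      Real.rpow_le_rpow_of_nonpos hx' (by linarith) (by linarith)
    nlinarith

lemma aux_cont_s7 (α p s T : ℝ) (hs : 0 < s) (hT : p + s < T) :
    ContinuousOn (fun θ : ℝ => (T - (p + θ * s)) ^ (-α)) (Set.uIcc 0 1) := by
  intro θ hθ
  rw [Set.uIcc_of_le zero_le_one] at hθ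
  have : 0 < T - (p + θ * s) := by nlinarith [hθ.2]
  apply ContinuousAt.continuousWithinAt
  apply ContinuousAt.rpow_const (by fun_prop)
  exact Or.inl this.ne'

/-- the `c` part -/
lemma aux_c_s7 (α p s T T' C : ℝ) (hα : 0 < α) (hs : 0 < s) (hT : p + s < T) (hT' : T < T')
    (hC : 0 ≤ C) :
    ∫ θ in (0:ℝ)..1, C * (2 * θ - 1) * (T' - (p + θ * s)) ^ (-α) ≤
    ∫ θ in (0:ℝ)..1, C * (2 * θ - 1) * (T - (p + θ * s)) ^ (-α) := by
  have c1 := aux_cont_s7 α p s T hs hT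
  have c2 := aux_cont_s7 α p s T' hs (hT.trans hT')
  set m := (T' - (p + 1 / 2 * s)) ^ (-α) - (T - (p + 1 / 2 * s)) ^ (-α) with hm
  have hz : ∫ θ in (0:ℝ)..1, C * (2 * θ - 1) * m = 0 := by
    have : (fun θ : ℝ => C * (2 * θ - 1) * m) = fun θ => (2 * C * m) * θ - C * m := by
      ext; ring
    rw [this, intervalIntegral.integral_sub (Continuous.intervalIntegrable (by fun_prop) _ _)
      (Continuous.intervalIntegrable (by fun_prop) _ _), intervalIntegral.integral_const_mul,
      integral_id]
    simp; ring
  have i1 : IntervalIntegrable (fun θ : ℝ => C * (2 * θ - 1) * (T - (p + θ * s)) ^ (-α))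
      volume 0 1 := (ContinuousOn.mul (by fun_prop) c1).intervalIntegrable
  have i2 : IntervalIntegrable (fun θ : ℝ => C * (2 * θ - 1) * (T' - (p + θ * s)) ^ (-α))
      volume 0 1 := (ContinuousOn.mul (by fun_prop) c2).intervalIntegrable
  have i3 : IntervalIntegrable (fun θ : ℝ => C * (2 * θ - 1) * m) volume 0 1 :=
    Continuous.intervalIntegrable (by fun_prop) _ _
  have key : ∫ θ in (0:ℝ)..1, C * (2 * θ - 1) * (T' - (p + θ * s)) ^ (-α) ≤
      ∫ θ in (0:ℝ)..1, (C * (2 * θ - 1) * (T - (p + θ * s)) ^ (-α) + C * (2 * θ - 1) * m) := by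
    apply intervalIntegral.integral_mono_on zero_le_one i2 (i1.add i3)
    intro θ hθ
    have hM := aux_mono α (T' - T) hα (sub_pos.2 hT')
    have p1 : 0 < T - (p + θ * s) := by nlinarith [hθ.2]
    have p2 : 0 < T - (p + 1 / 2 * s) := by nlinarith
    have e : ∀ y : ℝ, T - y + (T' - T) = T' - y := by intro y; ring
    have : (2 * θ - 1) * ((T' - (p + θ * s)) ^ (-α) - (T - (p + θ * s)) ^ (-α) - m) ≤ 0 := by
      rcases le_total θ (1 / 2) with h | h
      · have := hM p2 p1 (by nlinarith)
        simp only [e] at this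
        exact mul_nonpos_of_nonpos_of_nonneg (by linarith) (by linarith)
      · have := hM p1 p2 (by nlinarith)
        simp only [e] at this
        exact mul_nonpos_of_nonneg_of_nonpos (by linarith) (by linarith)
    nlinarith [mul_le_mul_of_nonneg_left this hC]
  rw [intervalIntegral.integral_add i1 i3, hz, add_zero] at key
  exact key

/-- the `a` part -/
lemma aux_a_s7 (α p s r T T' C : ℝ) (hα : 0 < α) (hs : 0 < s) (hr : 0 < r) (hT : p + s < T)
    (hT' : T < T') (hC : 0 < C) :
    ∫ θ in (0:ℝ)..1, C * (-2 * s * (1 - θ) - r) * (T - (p + θ * s)) ^ (-α) <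
    ∫ θ in (0:ℝ)..1, C * (-2 * s * (1 - θ) - r) * (T' - (p + θ * s)) ^ (-α) := by
  have c1 := aux_cont_s7 α p s T hs hT
  have c2 := aux_cont_s7 α p s T' hs (hT.trans hT')
  have key : ∀ θ ∈ Set.Icc (0:ℝ) 1, C * (-2 * s * (1 - θ) - r) * (T - (p + θ * s)) ^ (-α) <
      C * (-2 * s * (1 - θ) - r) * (T' - (p + θ * s)) ^ (-α) := by
    intro θ hθ
    have p1 : 0 < T - (p + θ * s) := by nlinarith [hθ.2]
    have h1 : (T' - (p + θ * s)) ^ (-α) < (T - (p + θ * s)) ^ (-α) :=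
      Real.rpow_lt_rpow_of_neg p1 (by linarith) (by linarith)
    have h2 : -2 * s * (1 - θ) - r < 0 := by nlinarith [hθ.2]
    exact mul_lt_mul_of_neg_left h1 (mul_neg_of_pos_of_neg hC h2)
  rw [Set.uIcc_of_le zero_le_one] at c1 c2
  apply intervalIntegral.integral_lt_integral_of_continuousOn_of_le_of_exists_lt zero_lt_one
    (ContinuousOn.mul (by fun_prop) c1) (ContinuousOn.mul (by fun_prop) c2)
  · intro θ hθ
    exact (key θ (Set.Ioc_subset_Icc_self hθ)).le
  · exact ⟨0, by simp, key 0 (by simp)⟩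

lemma acoef_eq (α : ℝ) (t : ℕ → ℝ) (j k : ℕ) (hs : 0 < tau t j)
    (hT : t (j - 1) + tau t j < tstar α t k) :
    acoef α t j k = ∫ θ in (0:ℝ)..1, (tau t j + tau t (j + 1))⁻¹ *
      (-2 * tau t j * (1 - θ) - tau t (j + 1)) *
      (tstar α t k - (t (j - 1) + θ * tau t j)) ^ (-α) := by
  unfold acoef
  apply intervalIntegral.integral_congr
  intro θ hθ
  rw [Set.uIcc_of_le zero_le_one] at hθ
  have : 0 < tstar α t k - (t (j - 1) + θ * tau t j) := by nlinarith [hθ.2]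
  simp only [Real.rpow_neg this.le, div_eq_mul_inv, mul_inv]
  ring

lemma ccoef_eq (α : ℝ) (t : ℕ → ℝ) (j k : ℕ) (hs : 0 < tau t j)
    (hT : t (j - 1) + tau t j < tstar α t k) :
    ccoef α t j k = ∫ θ in (0:ℝ)..1,
      (tau t j ^ 2 * ((tau t (j + 1))⁻¹ * (tau t j + tau t (j + 1))⁻¹)) *
      (2 * θ - 1) * (tstar α t k - (t (j - 1) + θ * tau t j)) ^ (-α) := by
  unfold ccoef
  apply intervalIntegral.integral_congr
  intro θ hθ
  rw [Set.uIcc_of_le zero_le_one] at hθ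
  have : 0 < tstar α t k - (t (j - 1) + θ * tau t j) := by nlinarith [hθ.2]
  simp only [Real.rpow_neg this.le, div_eq_mul_inv, mul_inv]
  ring

/-- (P8): `d_j^{k+1} - d_j^k < 0` for `k ≥ 3`, `2 ≤ j ≤ k-1`. -/
theorem dcoef_diff_k_neg (α : ℝ) (hα : α ∈ Set.Ioo (0:ℝ) 1)
    (t : ℕ → ℝ) (ht0 : t 0 = 0) (hmono : StrictMono t)
    (k j : ℕ) (hk : 3 ≤ k) (hj1 : 2 ≤ j) (hj2 : j ≤ k - 1) :
    dcoef α t j (k + 1) - dcoef α t j k < 0 := by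
  obtain ⟨h0, h1⟩ := hα
  have htau : ∀ i, 1 ≤ i → 0 < tau t i := fun i hi => sub_pos.2 (hmono (by omega))
  have hk0 := htau k (by omega)
  have hk1 := htau (k + 1) (by omega)
  have hTT : tstar α t k < tstar α t (k + 1) := by
    have e : t k = t (k - 1) + tau t k := by unfold tau; ring
    simp only [tstar, Nat.add_sub_cancel]
    nlinarith
  have hlow : ∀ i, i ≤ k - 1 → t (i - 1) + tau t i < tstar α t k := by
    intro i hi
    have e : t (i - 1) + tau t i = t i := by unfold tau; ring
    have := hmono.monotone hi
    rw [e, tstar]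
    nlinarith
  have A1 := hlow j hj2
  have A2 := hlow (j - 1) (by omega)
  have s1 := htau j (by omega)
  have s2 := htau (j - 1) (by omega)
  have s3 := htau (j + 1) (by omega)
  have s4 := htau (j - 1 + 1) (by omega)
  have ha := aux_a_s7 α (t (j - 1)) (tau t j) (tau t (j + 1)) _ _ (tau t j + tau t (j + 1))⁻¹ h0 s1 s3
    A1 hTT (by positivity)
  have hc := aux_c_s7 α (t (j - 1 - 1)) (tau t (j - 1)) _ _
    (tau t (j - 1) ^ 2 * ((tau t (j - 1 + 1))⁻¹ * (tau t (j - 1) + tau t (j - 1 + 1))⁻¹)) h0 s2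
    A2 hTT (by positivity)
  rw [← acoef_eq α t j k s1 A1, ← acoef_eq α t j (k + 1) s1 (A1.trans hTT)] at ha
  rw [← ccoef_eq α t _ k s2 A2, ← ccoef_eq α t _ (k + 1) s2 (A2.trans hTT)] at hc
  unfold dcoef
  linarith
end

section
/- Suppose the nonuniform time mesh satisfies the mesh ratio condition 1/ρ_{j+1} ≥ 1/(ρ_j²(1+ρ_j)) − 3 for all j ≥ 2. Then for every α ∈ (0,1) and all indices k ≥ 4 and 2 ≤ j ≤ k−2, the quantities d_j^k = c_{j−1}^k − a_j^k satisfy d_{j+1}^k − d_j^k > 0. -/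
open MeasureTheory Real Finset

theorem aux_key {g g' : ℝ → ℝ} (hd : ∀ x ∈ Set.Icc (0:ℝ) 1, HasDerivAt g (g' x) x)
    (hm : MonotoneOn g' (Set.Icc 0 1)) {x y : ℝ} (hx : 0 ≤ x) (hxy : x ≤ y) (hy : y ≤ 1) :
    g' x * (y - x) ≤ g y - g x ∧ g y - g x ≤ g' y * (y - x) := by
  rcases hxy.eq_or_lt with rfl | hlt
  · simp
  obtain ⟨c, hc, hce⟩ := exists_hasDerivAt_eq_slope g g' hlt
    (fun z hz => (hd z ⟨by linarith [hz.1], by linarith [hz.2]⟩).continuousAt.continuousWithinAt)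
    (fun z hz => hd z ⟨by linarith [hz.1], by linarith [hz.2]⟩)
  have hp : 0 < y - x := by linarith
  have e : g y - g x = g' c * (y - x) := by rw [hce]; field_simp
  have h1 := hm ⟨hx, by linarith⟩ ⟨by linarith [hc.1], by linarith [hc.2]⟩ hc.1.le
  have h2 := hm (a := c) ⟨by linarith [hc.1], by linarith [hc.2]⟩ ⟨by linarith, hy⟩ hc.2.le
  rw [e]
  exact ⟨mul_le_mul_of_nonneg_right h1 hp.le, mul_le_mul_of_nonneg_right h2 hp.le⟩

theorem aux_cont_s8 {g g' : ℝ → ℝ} (hd : ∀ x ∈ Set.Icc (0:ℝ) 1, HasDerivAt g (g' x) x) :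
    ContinuousOn g (Set.uIcc 0 1) := by
  rw [Set.uIcc_of_le zero_le_one]
  exact fun z hz => (hd z hz).continuousAt.continuousWithinAt

theorem aux_lower_s8 {g g' : ℝ → ℝ} (hd : ∀ x ∈ Set.Icc (0:ℝ) 1, HasDerivAt g (g' x) x)
    (hm : MonotoneOn g' (Set.Icc 0 1)) :
    g' 0 / 6 ≤ ∫ θ in (0:ℝ)..1, (2 * θ - 1) * g θ := by
  have hc := aux_cont_s8 hd
  have e : ∫ θ in (0:ℝ)..1, (2 * θ - 1) * (g (1/2) + g' 0 * (θ - 1/2)) = g' 0 / 6 := by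
    have : ∀ θ : ℝ, HasDerivAt (fun θ : ℝ => (θ ^ 2 - θ) * g (1/2)
        + g' 0 * (2 * θ ^ 3 / 3 - θ ^ 2 + θ / 2))
        ((2 * θ - 1) * (g (1/2) + g' 0 * (θ - 1/2))) θ := by
      intro θ
      have h1 := (((hasDerivAt_pow 2 θ).sub (hasDerivAt_id θ)).mul_const (g (1/2)))
      have h2 := (((((hasDerivAt_pow 3 θ).const_mul 2).div_const 3).sub
        (hasDerivAt_pow 2 θ)).add ((hasDerivAt_id θ).div_const 2)).const_mul (g' 0)
      refine (h1.add h2).congr_deriv ?_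
      norm_num; ring
    rw [intervalIntegral.integral_eq_sub_of_hasDerivAt (fun θ _ => this θ)
      (Continuous.intervalIntegrable (by fun_prop) _ _)]
    norm_num; ring
  rw [← e]
  apply intervalIntegral.integral_mono_on zero_le_one
    (Continuous.intervalIntegrable (by fun_prop) _ _)
    (ContinuousOn.intervalIntegrable (by fun_prop))
  intro θ hθ
  have h0 : ∀ x ∈ Set.Icc (0:ℝ) 1, g' 0 ≤ g' x := fun x hx =>
    hm ⟨le_rfl, zero_le_one⟩ hx hx.1
  rcases le_total θ (1/2) with h | h
  · have := (aux_key hd hm hθ.1 h (by norm_num)).1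
    have b := mul_le_mul_of_nonneg_right (h0 θ hθ) (sub_nonneg.2 h)
    exact mul_le_mul_of_nonpos_left (by linarith) (by linarith)
  · have := (aux_key hd hm (by norm_num) h hθ.2).1
    have b := mul_le_mul_of_nonneg_right (h0 (1/2) (by norm_num)) (sub_nonneg.2 h)
    exact mul_le_mul_of_nonneg_left (by linarith) (by linarith)

theorem aux_upper_s8 {g g' : ℝ → ℝ} (hd : ∀ x ∈ Set.Icc (0:ℝ) 1, HasDerivAt g (g' x) x)
    (hm : MonotoneOn g' (Set.Icc 0 1)) :
    ∫ θ in (0:ℝ)..1, (2 * θ - 1) * g θ ≤ g' 1 / 6 := by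
  have hc := aux_cont_s8 hd
  have e : ∫ θ in (0:ℝ)..1, (2 * θ - 1) * (g (1/2) + g' 1 * (θ - 1/2)) = g' 1 / 6 := by
    have : ∀ θ : ℝ, HasDerivAt (fun θ : ℝ => (θ ^ 2 - θ) * g (1/2)
        + g' 1 * (2 * θ ^ 3 / 3 - θ ^ 2 + θ / 2))
        ((2 * θ - 1) * (g (1/2) + g' 1 * (θ - 1/2))) θ := by
      intro θ
      have h1 := (((hasDerivAt_pow 2 θ).sub (hasDerivAt_id θ)).mul_const (g (1/2)))
      have h2 := (((((hasDerivAt_pow 3 θ).const_mul 2).div_const 3).sub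
        (hasDerivAt_pow 2 θ)).add ((hasDerivAt_id θ).div_const 2)).const_mul (g' 1)
      refine (h1.add h2).congr_deriv ?_
      norm_num; ring
    rw [intervalIntegral.integral_eq_sub_of_hasDerivAt (fun θ _ => this θ)
      (Continuous.intervalIntegrable (by fun_prop) _ _)]
    norm_num; ring
  rw [← e]
  apply intervalIntegral.integral_mono_on zero_le_one
    (ContinuousOn.intervalIntegrable (by fun_prop))
    (Continuous.intervalIntegrable (by fun_prop) _ _)
  intro θ hθ
  have h0 : ∀ x ∈ Set.Icc (0:ℝ) 1, g' x ≤ g' 1 := fun x hx =>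
    hm hx ⟨zero_le_one, le_rfl⟩ hx.2
  rcases le_total θ (1/2) with h | h
  · have := (aux_key hd hm hθ.1 h (by norm_num)).2
    have b := mul_le_mul_of_nonneg_right (h0 (1/2) (by norm_num)) (sub_nonneg.2 h)
    exact mul_le_mul_of_nonpos_left (by linarith) (by linarith)
  · have := (aux_key hd hm (by norm_num) h hθ.2).2
    have b := mul_le_mul_of_nonneg_right (h0 θ hθ) (sub_nonneg.2 h)
    exact mul_le_mul_of_nonneg_left (by linarith) (by linarith)

theorem aux_secant {g g' : ℝ → ℝ} (hd : ∀ x ∈ Set.Icc (0:ℝ) 1, HasDerivAt g (g' x) x)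
    (hm : MonotoneOn g' (Set.Icc 0 1)) :
    ∫ θ in (0:ℝ)..1, (6 * θ - 2) * g θ ≤ g 1 := by
  have hc := aux_cont_s8 hd
  obtain ⟨s, hs⟩ : ∃ s, s = 3 / 2 * (g 1 - g (1/3)) := ⟨_, rfl⟩
  have e : ∫ θ in (0:ℝ)..1, (6 * θ - 2) * (g 1 + s * (θ - 1)) = g 1 := by
    have : ∀ θ : ℝ, HasDerivAt (fun θ : ℝ => (3 * θ ^ 2 - 2 * θ) * g 1
        + s * (2 * θ ^ 3 - 4 * θ ^ 2 + 2 * θ))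
        ((6 * θ - 2) * (g 1 + s * (θ - 1))) θ := by
      intro θ
      have h1 := ((((hasDerivAt_pow 2 θ).const_mul 3).sub
        ((hasDerivAt_id θ).const_mul 2)).mul_const (g 1))
      have h2 := ((((hasDerivAt_pow 3 θ).const_mul 2).sub
        ((hasDerivAt_pow 2 θ).const_mul 4)).add ((hasDerivAt_id θ).const_mul 2)).const_mul s
      refine (h1.add h2).congr_deriv ?_
      norm_num; ring
    rw [intervalIntegral.integral_eq_sub_of_hasDerivAt (fun θ _ => this θ)
      (Continuous.intervalIntegrable (by fun_prop) _ _)]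
    norm_num
  refine le_trans ?_ e.le
  apply intervalIntegral.integral_mono_on zero_le_one
    (ContinuousOn.intervalIntegrable (by fun_prop))
    (Continuous.intervalIntegrable (by fun_prop) _ _)
  intro θ hθ
  rcases le_total θ (1/3) with h | h
  · have h1 := (aux_key hd hm hθ.1 h (by norm_num)).2
    have h2 := (aux_key hd hm (x := 1/3) (y := 1) (by norm_num) (by norm_num) le_rfl).1
    have h3 : g' (1/3) ≤ s := by rw [hs]; linarith
    have h4 : g 1 + s * (θ - 1) ≤ g θ := by
      have : g (1/3) = g 1 - 2/3 * s := by rw [hs]; ring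
      nlinarith
    nlinarith
  · have h1 := (aux_key hd hm (by norm_num) h hθ.2).2
    have h2 := (aux_key hd hm hθ.1 hθ.2 le_rfl).1
    have h4 : g θ ≤ g 1 + s * (θ - 1) := by
      have h5 : (g θ - g (1/3)) * (1 - θ) ≤ (g 1 - g θ) * (θ - 1/3) := by
        have a1 := mul_le_mul_of_nonneg_right h1 (sub_nonneg.2 hθ.2)
        have a2 := mul_le_mul_of_nonneg_right h2 (sub_nonneg.2 h)
        nlinarith
      rw [hs]; nlinarith
    nlinarith

/-- The kernel. -/
noncomputable def ker (α T x : ℝ) : ℝ := ((T - x) ^ α)⁻¹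

/-- Derivative of the kernel. -/
noncomputable def ker' (α T x : ℝ) : ℝ := α * (T - x) ^ (-α - 1)

theorem ker_deriv {α T a q : ℝ} (hq : 0 < q) (h : a + q < T) :
    ∀ x ∈ Set.Icc (0:ℝ) 1,
      HasDerivAt (fun θ => ker α T (a + θ * q)) (q * ker' α T (a + x * q)) x := by
  intro x hx
  have hp : ∀ y, y ≤ 1 → 0 < T - (a + y * q) := fun y hy => by nlinarith
  have h1 : HasDerivAt (fun θ : ℝ => T - (a + θ * q)) (-q) x := by
    have := ((((hasDerivAt_id x).mul_const q).const_add a).const_sub T)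
    simpa using this
  have h2 := h1.rpow_const (p := -α) (Or.inl (hp x hx.2).ne')
  have h3 := h2.congr_deriv (g' := q * ker' α T (a + x * q)) (by unfold ker'; ring)
  refine h3.congr_of_eventuallyEq ?_
  have : ∀ᶠ y in nhds x, 0 < T - (a + y * q) :=
    h1.continuousAt.eventually (lt_mem_nhds (hp x hx.2))
  filter_upwards [this] with y hy
  unfold ker
  rw [Real.rpow_neg hy.le]

theorem ker_mono {α T a q : ℝ} (hα : 0 < α) (hq : 0 < q) (h : a + q < T) :
    MonotoneOn (fun x => q * ker' α T (a + x * q)) (Set.Icc 0 1) := by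
  intro x hx y hy hxy
  have hp : 0 < T - (a + y * q) := by nlinarith [hy.2]
  have hle : T - (a + y * q) ≤ T - (a + x * q) := by nlinarith
  unfold ker'
  have := Real.rpow_le_rpow_of_nonpos hp hle (z := -α - 1) (by linarith)
  simp only
  gcongr

theorem ker_lt {α T x y : ℝ} (hα : 0 < α) (hxy : x < y) (h : y < T) :
    ker α T x < ker α T y := by
  unfold ker
  have h1 : 0 < T - y := by linarith
  have := Real.rpow_lt_rpow h1.le (show T - y < T - x by linarith) hα
  have h2 := Real.rpow_pos_of_pos h1 α
  gcongr

/-- First moment. -/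
noncomputable def GG (α T a q : ℝ) : ℝ := ∫ θ in (0:ℝ)..1, (2 * θ - 1) * ker α T (a + θ * q)

theorem aux_main {α T a p q r s : ℝ} (hα : 0 < α) (hp : 0 < p) (hq : 0 < q) (hr : 0 < r)
    (hs : 0 < s) (h : a + p + q + r < T)
    (hmesh : q / r ≥ p ^ 3 / (q ^ 2 * (p + q)) - 3) :
    0 < (∫ θ in (0:ℝ)..1, (q ^ 2 * (2 * θ - 1)) /
          (r * (q + r) * (T - (a + p + θ * q)) ^ α))
        - (∫ θ in (0:ℝ)..1, (-2 * r * (1 - θ) - s) /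
          ((r + s) * (T - (a + p + q + θ * r)) ^ α))
        - ((∫ θ in (0:ℝ)..1, (p ^ 2 * (2 * θ - 1)) /
          (q * (p + q) * (T - (a + θ * p)) ^ α))
        - (∫ θ in (0:ℝ)..1, (-2 * q * (1 - θ) - r) /
          ((q + r) * (T - (a + p + θ * q)) ^ α))) := by
  have d1 := ker_deriv (α := α) (T := T) (a := a) hp (by linarith)
  have d2 := ker_deriv (α := α) (T := T) (a := a + p) hq (by linarith)
  have d3 := ker_deriv (α := α) (T := T) (a := a + p + q) hr (by linarith)
  have m1 := ker_mono (α := α) (T := T) (a := a) hα hp (by linarith)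
  have m2 := ker_mono (α := α) (T := T) (a := a + p) hα hq (by linarith)
  have c2 := aux_cont_s8 d2
  have c3 := aux_cont_s8 d3
  have e1 : (∫ θ in (0:ℝ)..1, (q ^ 2 * (2 * θ - 1)) /
      (r * (q + r) * (T - (a + p + θ * q)) ^ α)) = q ^ 2 / (r * (q + r)) * GG α T (a + p) q := by
    unfold GG
    rw [← intervalIntegral.integral_const_mul]
    congr 1; ext θ; unfold ker
    rw [mul_div_mul_comm, div_eq_mul_inv (2 * θ - 1)] <;> ring
  have e2 : (∫ θ in (0:ℝ)..1, (p ^ 2 * (2 * θ - 1)) /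
      (q * (p + q) * (T - (a + θ * p)) ^ α)) = p ^ 2 / (q * (p + q)) * GG α T a p := by
    unfold GG
    rw [← intervalIntegral.integral_const_mul]
    congr 1; ext θ; unfold ker
    rw [mul_div_mul_comm, div_eq_mul_inv (2 * θ - 1)] <;> ring
  have e3 : (∫ θ in (0:ℝ)..1, (-2 * q * (1 - θ) - r) / ((q + r) * (T - (a + p + θ * q)) ^ α))
      = (q / (q + r) + 3) * GG α T (a + p) q
        - ∫ θ in (0:ℝ)..1, (6 * θ - 2) * ker α T (a + p + θ * q) := by
    unfold GG
    rw [← intervalIntegral.integral_const_mul, ← intervalIntegral.integral_sub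
      (ContinuousOn.intervalIntegrable (by fun_prop))
      (ContinuousOn.intervalIntegrable (by fun_prop))]
    congr 1; ext θ; unfold ker
    rw [div_mul_eq_div_div, div_eq_mul_inv _ (_ ^ α), ← mul_assoc, ← sub_mul]
    congr 1
    field_simp
    ring
  have e4 : ker α T (a + p + q) < - ∫ θ in (0:ℝ)..1, (-2 * r * (1 - θ) - s) /
          ((r + s) * (T - (a + p + q + θ * r)) ^ α) := by
    have hw : ∫ θ in (0:ℝ)..1, (2 * r * (1 - θ) + s) / (r + s) * ker α T (a + p + q)
        = ker α T (a + p + q) := by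
      have : ∀ θ : ℝ, HasDerivAt (fun θ : ℝ => (2 * r * θ - r * θ ^ 2 + s * θ) / (r + s)
          * ker α T (a + p + q)) ((2 * r * (1 - θ) + s) / (r + s) * ker α T (a + p + q)) θ := by
        intro θ
        have h1 := ((((((hasDerivAt_id θ).const_mul (2 * r)).sub
          ((hasDerivAt_pow 2 θ).const_mul r)).add ((hasDerivAt_id θ).const_mul s)).div_const
            (r + s)).mul_const (ker α T (a + p + q)))
        refine h1.congr_deriv ?_
        push_cast; ring
      rw [intervalIntegral.integral_eq_sub_of_hasDerivAt (fun θ _ => this θ)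
        (Continuous.intervalIntegrable (by fun_prop) _ _)]
      field_simp
      ring
    rw [← intervalIntegral.integral_neg, ← sub_pos]
    have hi : ∀ θ : ℝ, -((-2 * r * (1 - θ) - s) / ((r + s) * (T - (a + p + q + θ * r)) ^ α))
        = (2 * r * (1 - θ) + s) / (r + s) * ker α T (a + p + q + θ * r) := by
      intro θ
      unfold ker
      rw [div_mul_eq_div_div, div_eq_mul_inv _ (_ ^ α), ← neg_mul]
      congr 1
      ring
    simp_rw [hi]
    have i1 : IntervalIntegrable (fun θ : ℝ => (2 * r * (1 - θ) + s) / (r + s)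
        * ker α T (a + p + q + θ * r)) volume 0 1 :=
      ContinuousOn.intervalIntegrable (by fun_prop)
    have i2 : IntervalIntegrable (fun θ : ℝ => (2 * r * (1 - θ) + s) / (r + s)
        * ker α T (a + p + q)) volume 0 1 :=
      Continuous.intervalIntegrable (by fun_prop) _ _
    have i3 := intervalIntegral.integral_sub i1 i2
    rw [hw] at i3
    rw [← i3]
    apply intervalIntegral.intervalIntegral_pos_of_pos_on (i1.sub i2) _ zero_lt_one
    intro θ hθ
    have hk := ker_lt (T := T) hα (show a + p + q < a + p + q + θ * r by nlinarith [hθ.1])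
      (by nlinarith [hθ.2])
    have hw0 : 0 < (2 * r * (1 - θ) + s) / (r + s) := by
      have : 0 < 1 - θ := by linarith [hθ.2]
      positivity
    have := mul_lt_mul_of_pos_left hk hw0
    simpa using this
  have u1 := aux_upper_s8 d1 m1
  have l2 := aux_lower_s8 d2 m2
  have s2 := aux_secant d2 m2
  simp only [one_mul, zero_mul, add_zero] at u1 l2 s2
  change GG α T a p ≤ _ at u1
  change _ ≤ GG α T (a + p) q at l2
  rw [e1, e2, e3]
  set H := ker' α T (a + p) / 6 with hH
  have hH0 : 0 < H := by
    have : 0 < T - (a + p) := by linarith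
    rw [hH]; unfold ker'; positivity
  have u1' : GG α T a p ≤ p * H := by rw [hH]; linarith
  have l2' : q * H ≤ GG α T (a + p) q := by rw [hH]; linarith
  have key : p ^ 2 / (q * (p + q)) * GG α T a p ≤ (q / r + 3) * GG α T (a + p) q := by
    calc p ^ 2 / (q * (p + q)) * GG α T a p ≤ p ^ 2 / (q * (p + q)) * (p * H) := by gcongr
      _ = p ^ 3 / (q ^ 2 * (p + q)) * (q * H) := by field_simp
      _ ≤ (q / r + 3) * (q * H) := by
        apply mul_le_mul_of_nonneg_right _ (by positivity)
        linarith
      _ ≤ _ := by gcongr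
  have hc : q ^ 2 / (r * (q + r)) + q / (q + r) = q / r := by field_simp
  rw [← hc] at key
  linarith

/-- (P9): under the mesh-ratio condition `1/ρ_{j+1} ≥ 1/(ρ_j²(1+ρ_j)) - 3` for all `j ≥ 2`,
one has `d_{j+1}^k - d_j^k > 0` for `k ≥ 4`, `2 ≤ j ≤ k-2`. -/
theorem dcoef_diff_j_pos (α : ℝ) (hα : α ∈ Set.Ioo (0:ℝ) 1)
    (t : ℕ → ℝ) (ht0 : t 0 = 0) (hmono : StrictMono t)
    (hmesh : ∀ j : ℕ, 2 ≤ j →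
      1 / rho t (j + 1) ≥ 1 / (rho t j ^ 2 * (1 + rho t j)) - 3)
    (k j : ℕ) (hk : 4 ≤ k) (hj1 : 2 ≤ j) (hj2 : j ≤ k - 2) :
    dcoef α t (j + 1) k - dcoef α t j k > 0 := by
  obtain ⟨n, rfl⟩ : ∃ n, j = n + 2 := ⟨j - 2, by omega⟩
  obtain ⟨m, rfl⟩ : ∃ m, k = m + 1 := ⟨k - 1, by omega⟩
  have hτ : ∀ i, 0 < tau t (i + 1) := fun i => by
    unfold tau; exact sub_pos.2 (hmono (by simp))
  have hT : t (n + 3) < tstar α t (m + 1) := by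
    have h1 : t (n + 3) ≤ t m := hmono.monotone (by omega)
    have h2 := hτ m
    have h3 : 0 < 1 - α / 2 := by linarith [hα.2]
    unfold tstar
    have := mul_pos h3 h2
    simp only [Nat.add_sub_cancel]
    linarith
  have hm := hmesh (n + 2) hj1
  have r1 : rho t (n + 2 + 1) = tau t (n + 3) / tau t (n + 2) := rfl
  have r2 : rho t (n + 2) = tau t (n + 2) / tau t (n + 1) := rfl
  have p1 := hτ n
  have p2 := hτ (n + 1)
  have p3 := hτ (n + 2)
  have p4 := hτ (n + 3)
  simp only [Nat.add_assoc, Nat.reduceAdd] at p1 p2 p3 p4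
  have t1 : t (n + 1) = t n + tau t (n + 1) := by simp [tau]
  have t2 : t (n + 2) = t n + tau t (n + 1) + tau t (n + 2) := by
    rw [← t1]; simp [tau]
  have t3 : t (n + 3) = t n + tau t (n + 1) + tau t (n + 2) + tau t (n + 3) := by
    rw [← t2]; simp [tau]
  rw [r1, r2] at hm
  have main := aux_main (α := α) (T := tstar α t (m + 1)) (a := t n) hα.1 p1 p2 p3 p4
    (by rw [← t3]; exact hT) (by
      have x1 : tau t (n + 2) / tau t (n + 3) = 1 / (tau t (n + 3) / tau t (n + 2)) := by
        field_simp
      have x2 : tau t (n + 1) ^ 3 / (tau t (n + 2) ^ 2 * (tau t (n + 1) + tau t (n + 2))) =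
          1 / ((tau t (n + 2) / tau t (n + 1)) ^ 2 * (1 + tau t (n + 2) / tau t (n + 1))) := by
        field_simp
      rw [x1, x2]; exact hm)
  rw [← t2, ← t1] at main
  exact main
end

section
/- Suppose the nonuniform time mesh satisfies the mesh ratio condition 1/ρ_{j+1} ≥ 1/(ρ_j²(1+ρ_j)) − 3 for all j ≥ 2. Then for every α ∈ (0,1) and all indices k ≥ 4 and 2 ≤ j ≤ k−2, the quantities d_j^k = c_{j−1}^k − a_j^k satisfy d_{j+1}^k − d_j^k > d_{j+1}^{k+1} − d_j^{k+1}. -/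
open MeasureTheory Real Finset

/-- The difference kernel. -/
noncomputable def phiK (β T T' s : ℝ) : ℝ := (T - s) ^ (-β) - (T' - s) ^ (-β)

lemma phiK_pos {β T T' s : ℝ} (hβ : 0 < β) (hT : T < T') (hs : s < T) : 0 < phiK β T T' s := by
  unfold phiK
  have := Real.rpow_lt_rpow_of_neg (x := T - s) (y := T' - s) (z := -β) (by linarith) (by linarith)
    (by linarith)
  linarith

lemma phiK_deriv {β T T' s : ℝ} (hT : T < T') (hs : s < T) :
    HasDerivAt (phiK β T T') (β * phiK (β + 1) T T' s) s := by
  have h1 : HasDerivAt (fun s => (T - s) ^ (-β)) ((-1) * (-β) * (T - s) ^ (-β - 1)) s :=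
    ((hasDerivAt_id s).const_sub T).rpow_const (Or.inl (by simp; linarith))
  have h2 : HasDerivAt (fun s => (T' - s) ^ (-β)) ((-1) * (-β) * (T' - s) ^ (-β - 1)) s :=
    ((hasDerivAt_id s).const_sub T').rpow_const (Or.inl (by simp; linarith))
  have h3 := h1.sub h2
  have e : β * phiK (β + 1) T T' s =
      (-1) * (-β) * (T - s) ^ (-β - 1) - (-1) * (-β) * (T' - s) ^ (-β - 1) := by
    unfold phiK
    rw [show -(β + 1) = -β - 1 by ring]; ring
  rw [e]
  exact h3

lemma phiK_cont {β T T' : ℝ} (hT : T < T') : ContinuousOn (phiK β T T') (Set.Iio T) :=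
  fun _ hs => (phiK_deriv hT hs).continuousAt.continuousWithinAt

lemma phiK_mono {β T T' : ℝ} (hβ : 0 < β) (hT : T < T') :
    MonotoneOn (phiK β T T') (Set.Iio T) := by
  apply monotoneOn_of_deriv_nonneg (convex_Iio T) (phiK_cont hT)
  · intro s hs
    rw [interior_Iio] at hs
    exact (phiK_deriv hT hs).differentiableAt.differentiableWithinAt
  · intro s hs
    rw [interior_Iio] at hs
    rw [(phiK_deriv hT hs).deriv]
    exact (mul_pos hβ (phiK_pos (by linarith) hT hs)).le

lemma phiK_tan_right {β T T' a s u : ℝ} (hβ : 0 < β) (hT : T < T') (ha : a ≤ s) (hsu : s ≤ u)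
    (hu : u < T) :
    phiK β T T' s + β * phiK (β + 1) T T' a * (u - s) ≤ phiK β T T' u := by
  have key : MonotoneOn (fun s => phiK β T T' s - β * phiK (β + 1) T T' a * s) (Set.Ico a T) := by
    have hd : ∀ s ∈ Set.Ico a T, HasDerivAt
        (fun s => phiK β T T' s - β * phiK (β + 1) T T' a * s)
        (β * phiK (β + 1) T T' s - β * phiK (β + 1) T T' a * 1) s := fun s hs =>
      (phiK_deriv hT hs.2).sub ((hasDerivAt_id s).const_mul _)
    apply monotoneOn_of_deriv_nonneg (convex_Ico a T)
    · exact fun s hs => (hd s hs).continuousAt.continuousWithinAt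
    · exact fun s hs => (hd s (interior_subset hs)).differentiableAt.differentiableWithinAt
    · intro s hs
      have hs := interior_subset hs
      rw [(hd s hs).deriv]
      have := phiK_mono (β := β + 1) (by linarith) hT (lt_of_le_of_lt hs.1 hs.2) hs.2 hs.1
      have := mul_le_mul_of_nonneg_left this hβ.le
      linarith
  have := key ⟨ha, by linarith⟩ ⟨by linarith, hu⟩ hsu
  simp only at this
  linarith

lemma phiK_tan_left {β T T' a s u : ℝ} (hβ : 0 < β) (hT : T < T') (hsu : s ≤ u)
    (hu : u ≤ a) (ha : a < T) :
    phiK β T T' u ≤ phiK β T T' s + β * phiK (β + 1) T T' a * (u - s) := by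
  have key : MonotoneOn (fun s => β * phiK (β + 1) T T' a * s - phiK β T T' s) (Set.Iic a) := by
    have hd : ∀ s ∈ Set.Iic a, HasDerivAt
        (fun s => β * phiK (β + 1) T T' a * s - phiK β T T' s)
        (β * phiK (β + 1) T T' a * 1 - β * phiK (β + 1) T T' s) s := fun s hs =>
      ((hasDerivAt_id s).const_mul _).sub (phiK_deriv hT (lt_of_le_of_lt hs ha))
    apply monotoneOn_of_deriv_nonneg (convex_Iic a)
    · exact fun s hs => (hd s hs).continuousAt.continuousWithinAt
    · exact fun s hs => (hd s (interior_subset hs)).differentiableAt.differentiableWithinAt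
    · intro s hs
      have hs := interior_subset hs
      rw [(hd s hs).deriv]
      have := phiK_mono (β := β + 1) (by linarith) hT (lt_of_le_of_lt hs ha) ha hs
      have := mul_le_mul_of_nonneg_left this hβ.le
      linarith
  have := key (show s ∈ Set.Iic a by simp; linarith) hu hsu
  simp only at this
  linarith

lemma quad_int (a b c : ℝ) : ∫ θ in (0:ℝ)..1, (a + b * θ + c * θ ^ 2) = a + b / 2 + c / 3 := by
  rw [intervalIntegral.integral_add (by apply Continuous.intervalIntegrable; fun_prop)
    (by apply Continuous.intervalIntegrable; fun_prop),
    intervalIntegral.integral_add (by apply Continuous.intervalIntegrable; fun_prop)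
    (by apply Continuous.intervalIntegrable; fun_prop),
    intervalIntegral.integral_const_mul, intervalIntegral.integral_const_mul]
  simp
  ring

lemma int_of_cont {f : ℝ → ℝ} (hf : ContinuousOn f (Set.Icc 0 1)) :
    IntervalIntegrable f volume 0 1 :=
  ContinuousOn.intervalIntegrable (by rwa [Set.uIcc_of_le zero_le_one])

lemma GH_lower {f : ℝ → ℝ} (hf : ContinuousOn f (Set.Icc 0 1)) {c0 c1 p : ℝ} (hp0 : 0 ≤ p)
    (hp1 : p ≤ 1) (h : ∀ θ ∈ Set.Icc (0:ℝ) 1, c0 + c1 * θ ≤ f θ) :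
    c0 + c1 * (1 / 2 - p / 6) ≤
      (∫ θ in (0:ℝ)..1, f θ) - p * ∫ θ in (0:ℝ)..1, (2 * θ - 1) * f θ := by
  rw [← intervalIntegral.integral_const_mul, ← intervalIntegral.integral_sub (int_of_cont hf)
    (int_of_cont (by fun_prop))]
  have e := quad_int (c0 * (1 + p)) (c1 * (1 + p) - 2 * p * c0) (-2 * p * c1)
  calc _ = ∫ θ in (0:ℝ)..1, (c0 * (1 + p) + (c1 * (1 + p) - 2 * p * c0) * θ
              + (-2 * p * c1) * θ ^ 2) := by rw [e]; ring
    _ ≤ _ := by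
      apply intervalIntegral.integral_mono_on zero_le_one
      · apply Continuous.intervalIntegrable; fun_prop
      · exact int_of_cont (by fun_prop)
      · intro θ hθ
        have hw : 0 ≤ 1 - p * (2 * θ - 1) := by nlinarith [hθ.1, hθ.2]
        have := mul_le_mul_of_nonneg_left (h θ hθ) hw
        nlinarith

lemma G_upper {f : ℝ → ℝ} (hf : ContinuousOn f (Set.Icc 0 1)) {c0 c1 : ℝ}
    (h : ∀ θ ∈ Set.Icc (0:ℝ) 1, f θ ≤ c0 - c1 * (1 - θ)) :
    (∫ θ in (0:ℝ)..1, f θ) ≤ c0 - c1 / 2 := by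
  have e := quad_int (c0 - c1) c1 0
  calc
    _ ≤ ∫ θ in (0:ℝ)..1, ((c0 - c1) + c1 * θ + 0 * θ ^ 2) := by
      apply intervalIntegral.integral_mono_on zero_le_one (int_of_cont hf)
      · apply Continuous.intervalIntegrable; fun_prop
      · intro θ hθ
        linarith [h θ hθ]
    _ = _ := by rw [e]; ring

lemma H_lower {f : ℝ → ℝ} (hf : ContinuousOn f (Set.Icc 0 1)) {c : ℝ}
    (h : ∀ θ ∈ Set.Icc (0:ℝ) 1, ∀ η ∈ Set.Icc (0:ℝ) 1, θ ≤ η → f θ + c * (η - θ) ≤ f η) :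
    c / 6 ≤ ∫ θ in (0:ℝ)..1, (2 * θ - 1) * f θ := by
  have e := quad_int (-(f (1/2) - c / 2)) (2 * (f (1/2) - c / 2) - c) (2 * c)
  calc _ = ∫ θ in (0:ℝ)..1, (-(f (1/2) - c / 2) + (2 * (f (1/2) - c / 2) - c) * θ
        + (2 * c) * θ ^ 2) := by rw [e]; ring
    _ ≤ _ := by
      apply intervalIntegral.integral_mono_on zero_le_one
      · apply Continuous.intervalIntegrable; fun_prop
      · exact int_of_cont (by fun_prop)
      · intro θ hθ
        rcases le_total θ (1/2) with h' | h'
        · have := h θ hθ (1/2) (by norm_num) h'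
          nlinarith
        · have := h (1/2) (by norm_num) θ hθ h'
          nlinarith

lemma H_upper {f : ℝ → ℝ} (hf : ContinuousOn f (Set.Icc 0 1)) {c : ℝ}
    (h : ∀ θ ∈ Set.Icc (0:ℝ) 1, ∀ η ∈ Set.Icc (0:ℝ) 1, θ ≤ η → f η ≤ f θ + c * (η - θ)) :
    (∫ θ in (0:ℝ)..1, (2 * θ - 1) * f θ) ≤ c / 6 := by
  have := H_lower (f := fun θ => - f θ) hf.neg (c := -c) (fun θ hθ η hη hle => by
    have := h θ hθ η hη hle
    linarith)
  simp only [mul_neg, intervalIntegral.integral_neg] at this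
  linarith

lemma kern_cont {α T p y : ℝ} (hy : 0 < y) (hT : p + y < T) :
    ContinuousOn (fun θ : ℝ => (T - (p + θ * y)) ^ (-α)) (Set.Icc 0 1) := by
  apply ContinuousOn.rpow_const (by fun_prop)
  intro θ hθ
  left
  nlinarith [hθ.1, hθ.2]

lemma comp_cont {α T T' p y : ℝ} (hy : 0 < y) (hTT : T < T') (hT : p + y < T) :
    ContinuousOn (fun θ : ℝ => phiK α T T' (p + θ * y)) (Set.Icc 0 1) := by
  unfold phiK
  exact (kern_cont hy hT).sub (kern_cont hy (by linarith))

lemma a_diff {α T T' p y z : ℝ} (hy : 0 < y) (hz : 0 < z) (hTT : T < T') (hT : p + y < T) :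
    (∫ θ in (0:ℝ)..1, (-2 * y * (1 - θ) - z) / ((y + z) * (T - (p + θ * y)) ^ α))
    - (∫ θ in (0:ℝ)..1, (-2 * y * (1 - θ) - z) / ((y + z) * (T' - (p + θ * y)) ^ α))
    = -(∫ θ in (0:ℝ)..1, phiK α T T' (p + θ * y))
      + y / (y + z) * ∫ θ in (0:ℝ)..1, (2 * θ - 1) * phiK α T T' (p + θ * y) := by
  have E : ∀ S, p + y < S → Set.EqOn
      (fun θ => (-2 * y * (1 - θ) - z) / ((y + z) * (S - (p + θ * y)) ^ α))
      (fun θ => ((-2 * y * (1 - θ) - z) / (y + z)) * (S - (p + θ * y)) ^ (-α))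
      (Set.uIcc 0 1) := by
    intro S hS θ hθ
    rw [Set.uIcc_of_le zero_le_one] at hθ
    simp only
    rw [Real.rpow_neg (by nlinarith [hθ.1, hθ.2]), div_mul_eq_div_div, div_eq_mul_inv _ (_ ^ α)]
  have hk := kern_cont (α := α) hy hT
  have hk' := kern_cont (α := α) (T := T') hy (by linarith)
  have hc := comp_cont (α := α) hy hTT hT
  rw [intervalIntegral.integral_congr (E T hT),
    intervalIntegral.integral_congr (E T' (by linarith)),
    ← intervalIntegral.integral_sub (int_of_cont (by fun_prop)) (int_of_cont (by fun_prop)),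
    ← intervalIntegral.integral_const_mul, ← intervalIntegral.integral_neg,
    ← intervalIntegral.integral_add (int_of_cont (by fun_prop)) (int_of_cont (by fun_prop))]
  congr 1
  ext θ
  unfold phiK
  have : y + z ≠ 0 := by positivity
  field_simp
  ring

lemma c_diff {α T T' p y z : ℝ} (hy : 0 < y) (hz : 0 < z) (hTT : T < T') (hT : p + y < T) :
    (∫ θ in (0:ℝ)..1, (y ^ 2 * (2 * θ - 1)) / (z * (y + z) * (T - (p + θ * y)) ^ α))
    - (∫ θ in (0:ℝ)..1, (y ^ 2 * (2 * θ - 1)) / (z * (y + z) * (T' - (p + θ * y)) ^ α))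
    = y ^ 2 / (z * (y + z)) * ∫ θ in (0:ℝ)..1, (2 * θ - 1) * phiK α T T' (p + θ * y) := by
  have E : ∀ S, p + y < S → Set.EqOn
      (fun θ => (y ^ 2 * (2 * θ - 1)) / (z * (y + z) * (S - (p + θ * y)) ^ α))
      (fun θ => ((y ^ 2 * (2 * θ - 1)) / (z * (y + z))) * (S - (p + θ * y)) ^ (-α))
      (Set.uIcc 0 1) := by
    intro S hS θ hθ
    rw [Set.uIcc_of_le zero_le_one] at hθ
    simp only
    rw [Real.rpow_neg (by nlinarith [hθ.1, hθ.2]), div_mul_eq_div_div, div_eq_mul_inv _ (_ ^ α)]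
  have hk := kern_cont (α := α) hy hT
  have hk' := kern_cont (α := α) (T := T') hy (by linarith)
  have hc := comp_cont (α := α) hy hTT hT
  rw [intervalIntegral.integral_congr (E T hT),
    intervalIntegral.integral_congr (E T' (by linarith)),
    ← intervalIntegral.integral_sub (int_of_cont (by fun_prop)) (int_of_cont (by fun_prop)),
    ← intervalIntegral.integral_const_mul]
  congr 1
  ext θ
  unfold phiK
  ring

set_option maxHeartbeats 2000000 in
/-- (P10): under the mesh-ratio condition `1/ρ_{j+1} ≥ 1/(ρ_j²(1+ρ_j)) - 3` for all `j ≥ 2`,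
one has `d_{j+1}^k - d_j^k > d_{j+1}^{k+1} - d_j^{k+1}` for `k ≥ 4`, `2 ≤ j ≤ k-2`. -/
theorem dcoef_second_diff (α : ℝ) (hα : α ∈ Set.Ioo (0:ℝ) 1)
    (t : ℕ → ℝ) (ht0 : t 0 = 0) (hmono : StrictMono t)
    (hmesh : ∀ j : ℕ, 2 ≤ j →
      1 / rho t (j + 1) ≥ 1 / (rho t j ^ 2 * (1 + rho t j)) - 3)
    (k j : ℕ) (hk : 4 ≤ k) (hj1 : 2 ≤ j) (hj2 : j ≤ k - 2) :
    dcoef α t (j + 1) k - dcoef α t j k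
      > dcoef α t (j + 1) (k + 1) - dcoef α t j (k + 1) := by
  obtain ⟨hα0, hα1⟩ := hα
  obtain ⟨i, rfl⟩ : ∃ i, j = i + 2 := ⟨j - 2, by omega⟩
  obtain ⟨l, rfl⟩ : ∃ l, k = l + 1 := ⟨k - 1, by omega⟩
  have hm := hmesh (i + 2) hj1
  have hl : t (i + 3) ≤ t l := hmono.monotone (by omega)
  have h01 : t i < t (i + 1) := hmono (by omega)
  have h12 : t (i + 1) < t (i + 2) := hmono (by omega)
  have h23 : t (i + 2) < t (i + 3) := hmono (by omega)
  have h34 : t (i + 3) < t (i + 4) := hmono (by omega)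
  have hl1 : t l < t (l + 1) := hmono (by omega)
  have hl2 : t (l + 1) < t (l + 2) := hmono (by omega)
  have hT0 : t (i + 3) < tstar α t (l + 1) := by
    simp only [tstar, tau, Nat.add_sub_cancel]
    nlinarith
  have hTT : tstar α t (l + 1) < tstar α t (l + 1 + 1) := by
    simp only [tstar, tau, Nat.add_sub_cancel]
    nlinarith
  simp only [dcoef, acoef, ccoef, rho, tau, show i + 2 + 1 = i + 3 from rfl,
    show i + 3 + 1 = i + 4 from rfl, show i + 2 - 1 = i + 1 from rfl,
    show i + 3 - 1 = i + 2 from rfl, show i + 4 - 1 = i + 3 from rfl,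
    show i + 1 - 1 = i from rfl, show i + 1 + 1 = i + 2 from rfl] at hm ⊢
  generalize tstar α t (l + 1) = T at *
  generalize tstar α t (l + 1 + 1) = T' at *
  obtain ⟨x, hx⟩ : ∃ x, x = t (i + 1) - t i := ⟨_, rfl⟩
  obtain ⟨y, hy⟩ : ∃ y, y = t (i + 2) - t (i + 1) := ⟨_, rfl⟩
  obtain ⟨z, hz⟩ : ∃ z, z = t (i + 3) - t (i + 2) := ⟨_, rfl⟩
  obtain ⟨w, hw⟩ : ∃ w, w = t (i + 4) - t (i + 3) := ⟨_, rfl⟩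
  simp only [← hx, ← hy, ← hz, ← hw] at hm ⊢
  have hx0 : 0 < x := by linarith
  have hy0 : 0 < y := by linarith
  have hz0 : 0 < z := by linarith
  have hw0 : 0 < w := by linarith
  have A1 := a_diff (α := α) (p := t (i + 2)) hz0 hw0 hTT (by linarith)
  have C1 := c_diff (α := α) (p := t (i + 1)) hy0 hz0 hTT (by linarith)
  have A0 := a_diff (α := α) (p := t (i + 1)) hy0 hz0 hTT (by linarith)
  have C0 := c_diff (α := α) (p := t i) hx0 hy0 hTT (by linarith)
  set m := α * phiK (α + 1) T T' (t (i + 1)) with hmdef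
  have hm0 : 0 < m := mul_pos hα0 (phiK_pos (by linarith) hTT (by linarith))
  have B1 := GH_lower (comp_cont (α := α) (p := t (i + 2)) hz0 hTT (by linarith))
    (c0 := phiK α T T' (t (i + 2))) (c1 := m * z) (p := z / (z + w)) (by positivity)
    (by rw [div_le_one (by positivity)]; linarith) (by
      intro θ hθ
      have := phiK_tan_right (a := t (i + 1)) (s := t (i + 2)) (u := t (i + 2) + θ * z) hα0 hTT
        h12.le (by nlinarith [hθ.1]) (by nlinarith [hθ.2])
      linarith)
  have B2 := G_upper (comp_cont (α := α) (p := t (i + 1)) hy0 hTT (by linarith))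
    (c0 := phiK α T T' (t (i + 2))) (c1 := m * y) (by
      intro θ hθ
      have := phiK_tan_right (a := t (i + 1)) (s := t (i + 1) + θ * y) (u := t (i + 2)) hα0 hTT
        (by nlinarith [hθ.1]) (by nlinarith [hθ.2]) (by linarith)
      rw [← hmdef] at this
      have e : t (i + 2) - (t (i + 1) + θ * y) = y * (1 - θ) := by rw [hy]; ring
      rw [e] at this
      linarith)
  have B3 := H_lower (comp_cont (α := α) (p := t (i + 1)) hy0 hTT (by linarith))
    (c := m * y) (by
      intro θ hθ η hη hle
      have := phiK_tan_right (a := t (i + 1)) (s := t (i + 1) + θ * y) (u := t (i + 1) + η * y)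
        hα0 hTT (by nlinarith [hθ.1]) (by nlinarith) (by nlinarith [hη.2])
      linarith)
  have B4 := H_upper (comp_cont (α := α) (p := t i) hx0 hTT (by linarith))
    (c := m * x) (by
      intro θ hθ η hη hle
      have := phiK_tan_left (a := t (i + 1)) (s := t i + θ * x) (u := t i + η * x)
        hα0 hTT (by nlinarith) (by nlinarith [hη.2]) (by linarith)
      linarith)
  set H1 := ∫ θ in (0:ℝ)..1, (2 * θ - 1) * phiK α T T' (t (i + 1) + θ * y)
  set H0 := ∫ θ in (0:ℝ)..1, (2 * θ - 1) * phiK α T T' (t i + θ * x)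
  have hp : z / (z + w) ≤ 1 := by rw [div_le_one (by positivity)]; linarith
  have P1 : 0 < m * z * (1 / 2 - z / (z + w) / 6) := by
    apply mul_pos (mul_pos hm0 hz0); linarith
  have P3 := mul_le_mul_of_nonneg_left B3 (show 0 ≤ y / z by positivity)
  have P4 := mul_le_mul_of_nonneg_left B4 (show 0 ≤ x ^ 2 / (y * (x + y)) by positivity)
  have e1 : y ^ 2 / (z * (y + z)) * H1 + y / (y + z) * H1 = y / z * H1 := by
    field_simp
  have hm' : x ^ 3 / (y ^ 2 * (x + y)) ≤ y / z + 3 := by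
    have e2 : 1 / ((y / x) ^ 2 * (1 + y / x)) = x ^ 3 / (y ^ 2 * (x + y)) := by
      field_simp
    have e3 : 1 / (z / y) = y / z := by field_simp
    rw [e2, e3] at hm
    linarith
  have P5 := mul_le_mul_of_nonneg_left hm' (show 0 ≤ m * y / 6 by positivity)
  have e4 : m * y / 6 * (x ^ 3 / (y ^ 2 * (x + y))) = x ^ 2 / (y * (x + y)) * (m * x / 6) := by
    field_simp
  rw [e4] at P5
  linarith
end

section
/- For every α ∈ (0,1), every nonuniform time mesh, and all indices k ≥ 2 and 1 ≤ j ≤ k−1, the L2-1_σ coefficient a_j^k admits the representation a_j^k = −(t_k^* − t_j)^{−α} + (α τ_j/(τ_j + τ_{j+1})) ∫_0^1 (τ_j + τ_{j+1} + s τ_j)(1 − s)(t_k^* − t_j + s τ_j)^{−α−1} ds. -/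
open MeasureTheory Real Finset

theorem aux_ibp (α A p q : ℝ) (hA : 0 < A) (hp : 0 < p) (hq : 0 < q) :
    (∫ s in (0:ℝ)..1, (-2 * p * s - q) / ((p + q) * (A + s * p) ^ α))
      = -A ^ (-α) + α * p / (p + q) *
        ∫ s in (0:ℝ)..1, (p + q + s * p) * (1 - s) * (A + s * p) ^ (-α - 1) := by
  have hpos : ∀ s ∈ Set.uIcc (0:ℝ) 1, 0 < A + s * p := by
    intro s hs
    rw [Set.uIcc_of_le zero_le_one] at hs
    have := mul_nonneg hs.1 hp.le
    linarith
  have hcont : ∀ β : ℝ, ContinuousOn (fun s : ℝ => (A + s * p) ^ β) (Set.uIcc (0:ℝ) 1) := by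
    intro β
    apply ContinuousOn.rpow_const (by fun_prop)
    intro s hs
    exact Or.inl (hpos s hs).ne'
  have hpq : p + q ≠ 0 := by positivity
  have hi1 : IntervalIntegrable (fun s : ℝ => (-2 * p * s - q) * (A + s * p) ^ (-α))
      volume 0 1 :=
    (ContinuousOn.mul (by fun_prop) (hcont _)).intervalIntegrable
  have hi2 : IntervalIntegrable
      (fun s : ℝ => (p + q + s * p) * (1 - s) * (A + s * p) ^ (-α - 1)) volume 0 1 :=
    (ContinuousOn.mul (by fun_prop) (hcont _)).intervalIntegrable
  have hder : ∀ s ∈ Set.uIcc (0:ℝ) 1,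
      HasDerivAt (fun s : ℝ => ((p + q + s * p) * (1 - s)) * (A + s * p) ^ (-α))
        ((-2 * p * s - q) * (A + s * p) ^ (-α)
          - α * p * ((p + q + s * p) * (1 - s) * (A + s * p) ^ (-α - 1))) s := by
    intro s hs
    have h1 : HasDerivAt (fun s : ℝ => A + s * p) p s := by
      simpa using ((hasDerivAt_id s).mul_const p).const_add A
    have h2 : HasDerivAt (fun s : ℝ => p + q + s * p) p s := by
      simpa using ((hasDerivAt_id s).mul_const p).const_add (p + q)
    have h3 : HasDerivAt (fun s : ℝ => 1 - s) (-1) s := by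
      simpa using (hasDerivAt_id s).const_sub 1
    have h4 := h1.rpow_const (p := -α) (Or.inl (hpos s hs).ne')
    refine ((h2.mul h3).mul h4).congr_deriv ?_
    simp only [Pi.mul_apply]
    ring
  have hF := intervalIntegral.integral_eq_sub_of_hasDerivAt hder (hi1.sub (hi2.const_mul (α * p)))
  rw [intervalIntegral.integral_sub hi1 (hi2.const_mul (α * p)),
    intervalIntegral.integral_const_mul] at hF
  have hL : (∫ s in (0:ℝ)..1, (-2 * p * s - q) / ((p + q) * (A + s * p) ^ α))
      = (p + q)⁻¹ * ∫ s in (0:ℝ)..1, (-2 * p * s - q) * (A + s * p) ^ (-α) := by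
    rw [← intervalIntegral.integral_const_mul]
    apply intervalIntegral.integral_congr
    intro s hs
    simp only
    rw [Real.rpow_neg (hpos s hs).le, div_eq_mul_inv, mul_inv]
    ring
  rw [hL, sub_eq_iff_eq_add.mp hF]
  norm_num
  field_simp

/-- Reformulation of `a_j^k` around `t_j` for `k ≥ 2`, `1 ≤ j ≤ k-1`. -/
theorem acoef_repr_right (α : ℝ) (hα : α ∈ Set.Ioo (0:ℝ) 1)
    (t : ℕ → ℝ) (ht0 : t 0 = 0) (hmono : StrictMono t)
    (k j : ℕ) (hk : 2 ≤ k) (hj1 : 1 ≤ j) (hj2 : j ≤ k - 1) :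
    acoef α t j k
      = -(tstar α t k - t j) ^ (-α)
        + α * tau t j / (tau t j + tau t (j + 1)) *
          ∫ s in (0:ℝ)..1,
            (tau t j + tau t (j + 1) + s * tau t j) * (1 - s) *
              (tstar α t k - t j + s * tau t j) ^ (-α - 1) := by
  have hjk : t j ≤ t (k - 1) := hmono.monotone hj2
  have hk' : t (k - 1) < t k := hmono (by omega)
  have hj' : t (j - 1) < t j := hmono (by omega)
  have hj'' : t j < t (j + 1) := hmono (by omega)
  have hp : 0 < tau t j := by unfold tau; linarith
  have hq : 0 < tau t (j + 1) := by unfold tau; simpa using hj''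
  have hA : 0 < tstar α t k - t j := by
    have h1 : 0 < 1 - α / 2 := by linarith [hα.2]
    have h2 : 0 < tau t k := by unfold tau; linarith
    have := mul_pos h1 h2
    unfold tstar
    linarith
  rw [← aux_ibp α _ _ _ hA hp hq]
  have h := intervalIntegral.integral_comp_sub_left (a := (0:ℝ)) (b := 1)
    (fun s : ℝ => (-2 * tau t j * s - tau t (j + 1)) /
      ((tau t j + tau t (j + 1)) * (tstar α t k - t j + s * tau t j) ^ α)) 1
  rw [sub_self, sub_zero] at h
  rw [← h]
  unfold acoef
  congr 1
  funext θ
  have e : tstar α t k - (t (j - 1) + θ * tau t j)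
      = tstar α t k - t j + (1 - θ) * tau t j := by
    have : tau t j = t j - t (j - 1) := rfl
    linear_combination -this
  rw [e]
end

section
/- For every α ∈ (0,1), every nonuniform time mesh, and all indices k ≥ 2 and 1 ≤ j ≤ k−1, the L2-1_σ coefficient a_j^k admits the representation a_j^k = −(t_k^* − t_{j−1})^{−α} − (α τ_j/(τ_j + τ_{j+1})) ∫_0^1 (τ_j + τ_{j+1} − s τ_j)(1 − s)(t_k^* − t_{j−1} − s τ_j)^{−α−1} ds. -/
open MeasureTheory Real Finset

/-- Reformulation of `a_j^k` around `t_{j-1}` for `k ≥ 2`, `1 ≤ j ≤ k-1`. -/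
theorem acoef_repr_left (α : ℝ) (hα : α ∈ Set.Ioo (0:ℝ) 1)
    (t : ℕ → ℝ) (ht0 : t 0 = 0) (hmono : StrictMono t)
    (k j : ℕ) (hk : 2 ≤ k) (hj1 : 1 ≤ j) (hj2 : j ≤ k - 1) :
    acoef α t j k
      = -(tstar α t k - t (j - 1)) ^ (-α)
        - α * tau t j / (tau t j + tau t (j + 1)) *
          ∫ s in (0:ℝ)..1,
            (tau t j + tau t (j + 1) - s * tau t j) * (1 - s) *
              (tstar α t k - t (j - 1) - s * tau t j) ^ (-α - 1) := by
  obtain ⟨hα0, hα1⟩ := hα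
  have hT : 0 < tau t j := sub_pos.2 (hmono (by omega))
  have hS : 0 < tau t (j + 1) := sub_pos.2 (hmono (by omega))
  have hK : 0 < tau t k := sub_pos.2 (hmono (by omega))
  have hD : tau t j < tstar α t k - t (j - 1) := by
    have h1 : t j ≤ t (k - 1) := hmono.monotone hj2
    have h2 : 0 < (1 - α / 2) * tau t k := mul_pos (by linarith) hK
    unfold tstar
    have h3 : tau t j = t j - t (j - 1) := rfl
    linarith
  unfold acoef
  simp only [← sub_sub (tstar α t k)]
  generalize tstar α t k - t (j - 1) = D at *
  generalize tau t j = T at *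
  generalize tau t (j + 1) = S at *
  have hpos : ∀ s ∈ Set.uIcc (0:ℝ) 1, 0 < D - s * T := by
    intro s hs
    rw [Set.uIcc_of_le zero_le_one] at hs
    nlinarith [hs.1, hs.2]
  have hTS : T + S ≠ 0 := by positivity
  have hint : ∀ p : ℝ, ContinuousOn (fun s : ℝ => (D - s * T) ^ p) (Set.uIcc (0:ℝ) 1) := by
    intro p
    exact ContinuousOn.rpow_const (by fun_prop) (fun s hs => Or.inl (hpos s hs).ne')
  have hderiv : ∀ s ∈ Set.uIcc (0:ℝ) 1,
      HasDerivAt (fun s : ℝ => (T + S - s * T) * (1 - s) * (D - s * T) ^ (-α) / (T + S))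
        ((-2 * T * (1 - s) - S) / (T + S) * (D - s * T) ^ (-α) +
          α * T / (T + S) * ((T + S - s * T) * (1 - s) * (D - s * T) ^ (-α - 1))) s := by
    intro s hs
    have h1 : HasDerivAt (fun s : ℝ => D - s * T) (-T) s := by
      simpa using ((hasDerivAt_id s).mul_const T).const_sub D
    have h2 : HasDerivAt (fun s : ℝ => T + S - s * T) (-T) s := by
      simpa using ((hasDerivAt_id s).mul_const T).const_sub (T + S)
    have h3 : HasDerivAt (fun s : ℝ => 1 - s) (-1) s := by
      simpa using (hasDerivAt_id s).const_sub 1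
    have h4 := h1.rpow_const (p := -α) (Or.inl (hpos s hs).ne')
    refine HasDerivAt.congr_deriv (((h2.mul h3).mul h4).div_const (T + S)) ?_
    simp only [Pi.mul_apply]
    field_simp
    ring
  have hI1 : IntervalIntegrable (fun s : ℝ => (-2 * T * (1 - s) - S) / (T + S) *
      (D - s * T) ^ (-α)) volume 0 1 :=
    (ContinuousOn.mul (by fun_prop) (hint _)).intervalIntegrable
  have hI2 : IntervalIntegrable (fun s : ℝ => α * T / (T + S) *
      ((T + S - s * T) * (1 - s) * (D - s * T) ^ (-α - 1))) volume 0 1 :=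
    (continuousOn_const.mul (ContinuousOn.mul (by fun_prop) (hint _))).intervalIntegrable
  have key := intervalIntegral.integral_eq_sub_of_hasDerivAt hderiv (hI1.add hI2)
  rw [intervalIntegral.integral_add hI1 hI2, intervalIntegral.integral_const_mul] at key
  have e : ∫ θ in (0:ℝ)..1, (-2 * T * (1 - θ) - S) / ((T + S) * (D - θ * T) ^ α) =
      ∫ s in (0:ℝ)..1, (-2 * T * (1 - s) - S) / (T + S) * (D - s * T) ^ (-α) := by
    apply intervalIntegral.integral_congr
    intro s hs
    simp only [Real.rpow_neg (hpos s hs).le]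
    rw [← div_div, div_eq_mul_inv _ ((D - s * T) ^ α)]
  rw [e, eq_sub_iff_add_eq, key]
  simp
  field_simp
end

section
/- For every α ∈ (0,1), every nonuniform time mesh, and all indices k ≥ 2 and 1 ≤ j ≤ k−1, the L2-1_σ coefficient c_j^k admits the representation c_j^k = (α τ_j³/(τ_{j+1}(τ_j + τ_{j+1}))) ∫_0^1 s(1 − s)(t_k^* − t_j + s τ_j)^{−α−1} ds. -/
open MeasureTheory Real Finset

/-- Reformulation of `c_j^k` for `k ≥ 2`, `1 ≤ j ≤ k-1`. -/
theorem ccoef_repr (α : ℝ) (hα : α ∈ Set.Ioo (0:ℝ) 1)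
    (t : ℕ → ℝ) (ht0 : t 0 = 0) (hmono : StrictMono t)
    (k j : ℕ) (hk : 2 ≤ k) (hj1 : 1 ≤ j) (hj2 : j ≤ k - 1) :
    ccoef α t j k
      = α * tau t j ^ 3 / (tau t (j + 1) * (tau t j + tau t (j + 1))) *
          ∫ s in (0:ℝ)..1,
            s * (1 - s) * (tstar α t k - t j + s * tau t j) ^ (-α - 1) := by
  obtain ⟨hα0, hα1⟩ := hα
  have hτ : 0 < tau t j := by
    unfold tau; exact sub_pos.2 (hmono (by omega))
  have hτ' : 0 < tau t (j + 1) := by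
    unfold tau; exact sub_pos.2 (hmono (by omega))
  have hτk : 0 < tau t k := by
    unfold tau; exact sub_pos.2 (hmono (by omega))
  have hA : 0 < tstar α t k - t j := by
    have h1 : t j ≤ t (k - 1) := hmono.monotone hj2
    have h2 : 0 < (1 - α / 2) * tau t k := mul_pos (by linarith) hτk
    unfold tstar; linarith
  have htj : t (j - 1) = t j - tau t j := by unfold tau; ring
  unfold ccoef
  rw [htj]
  generalize tstar α t k = T at *
  generalize tau t j = u at *
  generalize tau t (j + 1) = v at *
  obtain ⟨A, hAe⟩ : ∃ A, A = T - t j := ⟨_, rfl⟩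
  rw [← hAe] at hA ⊢
  have hpos : ∀ s ∈ Set.uIcc (0:ℝ) 1, 0 < A + s * u := by
    intro s hs
    rw [Set.uIcc_of_le zero_le_one] at hs
    have := mul_nonneg hs.1 hτ.le
    linarith
  have hcont : ∀ p : ℝ, ContinuousOn (fun s : ℝ => (A + s * u) ^ p) (Set.uIcc (0:ℝ) 1) := by
    intro p
    apply ContinuousOn.rpow_const (by fun_prop)
    intro s hs
    exact Or.inl (hpos s hs).ne'
  have hi1 : IntervalIntegrable (fun s : ℝ => (1 - 2 * s) * (A + s * u) ^ (-α)) volume 0 1 :=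
    (ContinuousOn.mul (by fun_prop) (hcont (-α))).intervalIntegrable
  have hi2 : IntervalIntegrable (fun s : ℝ => s * (1 - s) * (A + s * u) ^ (-α - 1)) volume 0 1 :=
    (ContinuousOn.mul (by fun_prop) (hcont (-α - 1))).intervalIntegrable
  have key := intervalIntegral.integral_eq_sub_of_hasDerivAt
    (f := fun s : ℝ => s * (1 - s) * (A + s * u) ^ (-α))
    (f' := fun s : ℝ => (1 - 2 * s) * (A + s * u) ^ (-α)
      - (α * u) * (s * (1 - s) * (A + s * u) ^ (-α - 1))) (a := 0) (b := 1)
    (by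
      intro s hs
      have d1 : HasDerivAt (fun s : ℝ => A + s * u) u s := by
        simpa using ((hasDerivAt_id s).mul_const u).const_add A
      have d2 := d1.rpow_const (p := -α) (Or.inl (hpos s hs).ne')
      have d3 : HasDerivAt (fun s : ℝ => s * (1 - s)) (1 * (1 - s) + s * (-1)) s :=
        (hasDerivAt_id s).mul ((hasDerivAt_id s).const_sub 1)
      refine (d3.mul d2).congr_deriv ?_
      ring)
    (hi1.sub (hi2.const_mul _))
  rw [intervalIntegral.integral_sub hi1 (hi2.const_mul _),
    intervalIntegral.integral_const_mul] at key
  have hsub := intervalIntegral.integral_comp_sub_left (a := 0) (b := 1)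
    (fun θ : ℝ => (u ^ 2 * (2 * θ - 1)) / (v * (u + v) * (T - (t j - u + θ * u)) ^ α)) 1
  simp only [sub_self, sub_zero] at hsub
  rw [← hsub]
  have hc : (∫ s in (0:ℝ)..1, (u ^ 2 * (2 * (1 - s) - 1)) /
      (v * (u + v) * (T - (t j - u + (1 - s) * u)) ^ α))
      = ∫ s in (0:ℝ)..1, u ^ 2 / (v * (u + v)) * ((1 - 2 * s) * (A + s * u) ^ (-α)) := by
    apply intervalIntegral.integral_congr
    intro s hs
    have e : T - (t j - u + (1 - s) * u) = A + s * u := by rw [hAe]; ring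
    have hp := Real.rpow_pos_of_pos (hpos s hs) α
    simp only [e]
    rw [Real.rpow_neg (hpos s hs).le]
    field_simp
    ring
  rw [hc, intervalIntegral.integral_const_mul]
  have key2 : (∫ s in (0:ℝ)..1, (1 - 2 * s) * (A + s * u) ^ (-α))
      = α * u * ∫ s in (0:ℝ)..1, s * (1 - s) * (A + s * u) ^ (-α - 1) := by
    have : (1:ℝ) * (1 - 1) * (A + 1 * u) ^ (-α) - 0 * (1 - 0) * (A + 0 * u) ^ (-α) = 0 := by ring
    linarith
  rw [key2]
  ring
end

section
/- Let α ∈ (0,1), σ = 1 − α/2, and let ρ* ≈ 0.356341 be the unique positive root of ρ(1+ρ) = 1 − 3ρ²(1+ρ). Then for every ρ ≥ ρ*: (i) 2σ − (1−α)/ρ^α ≥ 0, and (ii) 2σ − (1−α) − [α(1−α)/((1+ρ)ρ^α)] ∫_0^1 s(ρ+s)/(σρ+s) ds ≥ 1 − 1/(4(1+ρ*)ρ*) ≥ 0. -/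
open MeasureTheory Real Finset

/-- Elementary inequalities at `σ = 1 - α/2` for ratios `ρ ≥ ρ*`. -/
theorem weight_ineqs (α : ℝ) (hα : α ∈ Set.Ioo (0:ℝ) 1)
    (ρstar : ℝ) (hρpos : 0 < ρstar)
    (hρroot : ρstar * (1 + ρstar) = 1 - 3 * ρstar ^ 2 * (1 + ρstar))
    (ρ : ℝ) (hρ : ρstar ≤ ρ) :
    2 * (1 - α / 2) - (1 - α) / ρ ^ α ≥ 0 ∧
    2 * (1 - α / 2) - (1 - α)
        - α * (1 - α) / ((1 + ρ) * ρ ^ α) *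
          ∫ s in (0:ℝ)..1, s * (ρ + s) / ((1 - α / 2) * ρ + s)
      ≥ 1 - 1 / (4 * (1 + ρstar) * ρstar) ∧
    (1:ℝ) - 1 / (4 * (1 + ρstar) * ρstar) ≥ 0 := by
  obtain ⟨h0, h1⟩ := hα
  have hs1 : (1:ℝ) / 3 < ρstar := by
    by_contra h
    push Not at h
    have h2 : ρstar * ρstar ≤ 1 / 3 * (1 / 3) := by gcongr
    have h3 : ρstar ^ 2 * (1 + ρstar) ≤ (1 / 3) ^ 2 * (1 + 1 / 3) := by gcongr
    nlinarith
  have hs2 : ρstar < 1 := by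
    by_contra h
    push Not at h
    nlinarith [mul_pos hρpos hρpos, mul_pos (mul_pos hρpos hρpos) hρpos]
  have hρ0 : 0 < ρ := lt_of_lt_of_le hρpos hρ
  have hpow : 0 < ρ ^ α := Real.rpow_pos_of_pos hρ0 α
  have hprod : 1 ≤ 4 * (1 + ρstar) * ρstar := by nlinarith
  refine ⟨?_, ?_, ?_⟩
  · -- Bernoulli applied to 1/ρ
    have hinv : ρ⁻¹ ≤ 3 := by
      rw [inv_le_comm₀ hρ0 (by norm_num)]
      linarith
    have hb : (ρ⁻¹) ^ α ≤ 1 + 2 * α := by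
      calc (ρ⁻¹) ^ α ≤ 3 ^ α := Real.rpow_le_rpow (by positivity) hinv h0.le
        _ = (1 + 2) ^ α := by norm_num
        _ ≤ 1 + α * 2 := rpow_one_add_le_one_add_mul_self (by norm_num) h0.le h1.le
        _ = 1 + 2 * α := by ring
    rw [div_eq_mul_inv (1 - α), ← Real.inv_rpow hρ0.le]
    have := mul_le_mul_of_nonneg_left hb (sub_nonneg.2 h1.le)
    nlinarith [sq_nonneg (2 * α - 1)]
  · have hden : ∀ s ∈ Set.Icc (0:ℝ) 1, 0 < (1 - α / 2) * ρ + s := by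
      intro s hs
      have : 0 < (1 - α / 2) * ρ := mul_pos (by linarith) hρ0
      linarith [hs.1]
    have hI : ∫ s in (0:ℝ)..1, s * (ρ + s) / ((1 - α / 2) * ρ + s) ≤ 1 := by
      have h2 : ∫ s in (0:ℝ)..1, 2 * s = 1 := by
        rw [intervalIntegral.integral_const_mul, integral_id]; norm_num
      refine le_trans ?_ h2.le
      apply intervalIntegral.integral_mono_on zero_le_one
      · apply ContinuousOn.intervalIntegrable
        rw [Set.uIcc_of_le (by norm_num)]
        apply ContinuousOn.div (by fun_prop) (by fun_prop)
        intro s hs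
        exact (hden s hs).ne'
      · exact Continuous.intervalIntegrable (by fun_prop) _ _
      · intro s hs
        rw [div_le_iff₀ (hden s hs)]
        nlinarith [hs.1, mul_nonneg hs.1 hs.1,
          mul_nonneg (mul_nonneg hs.1 hρ0.le) (sub_nonneg.2 h1.le)]
    have hD : (1 + ρstar) * ρstar ≤ (1 + ρ) * ρ ^ α := by
      have : ρstar ≤ ρ ^ α := by
        calc ρstar = ρstar ^ (1:ℝ) := (Real.rpow_one _).symm
          _ ≤ ρstar ^ α := Real.rpow_le_rpow_of_exponent_ge hρpos hs2.le h1.le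
          _ ≤ ρ ^ α := Real.rpow_le_rpow hρpos.le hρ h0.le
      gcongr
    have hc0 : 0 ≤ α * (1 - α) / ((1 + ρ) * ρ ^ α) :=
      div_nonneg (mul_nonneg h0.le (by linarith)) (by positivity)
    have hc : α * (1 - α) / ((1 + ρ) * ρ ^ α) ≤ 1 / (4 * (1 + ρstar) * ρstar) := by
      rw [show 1 / (4 * (1 + ρstar) * ρstar) = (1 / 4) / ((1 + ρstar) * ρstar) by
        field_simp]
      apply div_le_div₀ (by norm_num) _ (by positivity) hD
      nlinarith [sq_nonneg (2 * α - 1)]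
    have := mul_le_mul_of_nonneg_left hI hc0
    linarith
  · have : 1 / (4 * (1 + ρstar) * ρstar) ≤ 1 := by
      rw [div_le_one (by positivity)]
      exact hprod
    linarith
end

section
/- Suppose the nonuniform time mesh satisfies: for every k ≥ 2, if ρ* < ρ_k < η then ρ* < ρ_{k+1} ≤ ρ_k²(1+ρ_k)/(1 − 3ρ_k²(1+ρ_k)), and if ρ_k ≥ η then ρ_{k+1} > ρ*. Then for all 1 ≤ j ≤ k, the entries of the L2-1_σ matrix satisfy [M]_{k,j} ≥ (ρ*/((1+ρ*)τ_j)) ∫_{t_{j−1}}^{min(t_j, t_k^*)} (t_k^* − s)^{−α} ds. -/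
open MeasureTheory Real Finset

lemma tau_pos_aux (t : ℕ → ℝ) (hmono : StrictMono t) (j : ℕ) (hj : 1 ≤ j) : 0 < tau t j := by
  unfold tau
  have := hmono (show j - 1 < j by omega)
  linarith

lemma base_pos_aux (α : ℝ) (hα : α ∈ Set.Ioo (0:ℝ) 1) (t : ℕ → ℝ) (hmono : StrictMono t)
    (k j : ℕ) (hj : 1 ≤ j) (hjk : j < k) (θ : ℝ) (hθ : θ ∈ Set.Icc (0:ℝ) 1) :
    0 < tstar α t k - (t (j - 1) + θ * tau t j) := by
  have h1 := tau_pos_aux t hmono j hj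
  have h2 := tau_pos_aux t hmono k (by omega)
  have h3 : t j ≤ t (k - 1) := hmono.monotone (by omega)
  have h4 : θ * tau t j ≤ tau t j := by nlinarith [hθ.2]
  have h5 : 0 < (1 - α / 2) * tau t k := mul_pos (by linarith [hα.2]) h2
  have h6 : tau t j = t j - t (j - 1) := rfl
  unfold tstar
  linarith

lemma cont_aux (α : ℝ) (hα : α ∈ Set.Ioo (0:ℝ) 1) (t : ℕ → ℝ) (hmono : StrictMono t)
    (k j : ℕ) (hj : 1 ≤ j) (hjk : j < k) :
    ContinuousOn (fun θ : ℝ => (tstar α t k - (t (j - 1) + θ * tau t j)) ^ α)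
      (Set.uIcc (0:ℝ) 1) := by
  apply ContinuousOn.rpow_const
  · fun_prop
  · intro θ _
    exact Or.inr hα.1.le

lemma ccoef_nonneg_aux (α : ℝ) (hα : α ∈ Set.Ioo (0:ℝ) 1) (t : ℕ → ℝ) (hmono : StrictMono t)
    (k j : ℕ) (hj : 1 ≤ j) (hjk : j < k) : 0 ≤ ccoef α t j k := by
  have hτ := tau_pos_aux t hmono j hj
  have hτ' := tau_pos_aux t hmono (j + 1) (by omega)
  have hpos := base_pos_aux α hα t hmono k j hj hjk
  have hcont := cont_aux α hα t hmono k j hj hjk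
  have hIcc : Set.uIcc (0:ℝ) 1 = Set.Icc 0 1 := Set.uIcc_of_le zero_le_one
  unfold ccoef
  set B := tau t (j + 1) * (tau t j + tau t (j + 1)) with hB
  have hBpos : 0 < B := by positivity
  set g : ℝ → ℝ := fun θ => (tstar α t k - (t (j - 1) + θ * tau t j)) ^ α with hg
  have hgpos : ∀ θ ∈ Set.Icc (0:ℝ) 1, 0 < g θ := fun θ hθ => rpow_pos_of_pos (hpos θ hθ) _
  have h0 : ∫ θ in (0:ℝ)..1, (tau t j ^ 2 * (2 * θ - 1)) / (B * g (1/2)) = 0 := by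
    rw [intervalIntegral.integral_div, intervalIntegral.integral_const_mul,
      intervalIntegral.integral_sub (Continuous.intervalIntegrable (by fun_prop) _ _)
        (Continuous.intervalIntegrable (by fun_prop) _ _),
      intervalIntegral.integral_const_mul, integral_id]
    norm_num
  refine h0.symm.le.trans ?_
  apply intervalIntegral.integral_mono_on zero_le_one
  · apply Continuous.intervalIntegrable; fun_prop
  · apply ContinuousOn.intervalIntegrable
    apply ContinuousOn.div (by fun_prop) (continuousOn_const.mul hcont)
    intro θ hθ
    exact (mul_pos hBpos (hgpos θ (hIcc ▸ hθ))).ne'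
  · intro θ hθ
    have hhalf : (1/2 : ℝ) ∈ Set.Icc (0:ℝ) 1 := by constructor <;> norm_num
    have p1 := hgpos θ hθ
    have p2 := hgpos _ hhalf
    change tau t j ^ 2 * (2 * θ - 1) / (B * g (1/2)) ≤ tau t j ^ 2 * (2 * θ - 1) / (B * g θ)
    rw [div_le_div_iff₀ (by positivity) (by positivity)]
    have key : (2 * θ - 1) * g θ ≤ (2 * θ - 1) * g (1/2) := by
      rcases le_total θ (1/2) with h | h
      · have : g (1/2) ≤ g θ := rpow_le_rpow (hpos _ hhalf).le (by nlinarith) hα.1.le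
        exact mul_le_mul_of_nonpos_left this (by linarith)
      · have : g θ ≤ g (1/2) := rpow_le_rpow (hpos _ hθ).le (by nlinarith) hα.1.le
        exact mul_le_mul_of_nonneg_left this (by linarith)
    have := mul_le_mul_of_nonneg_left key (show 0 ≤ tau t j ^ 2 * B by positivity)
    linarith

lemma acoef_bound_aux (α : ℝ) (hα : α ∈ Set.Ioo (0:ℝ) 1) (t : ℕ → ℝ) (hmono : StrictMono t)
    (r : ℝ) (hr : 0 < r) (k j : ℕ) (hj : 1 ≤ j) (hjk : j < k)
    (hrho : r < rho t (j + 1)) :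
    r / ((1 + r) * tau t j) *
          (∫ s in (t (j - 1))..(min (t j) (tstar α t k)), (tstar α t k - s) ^ (-α))
      ≤ -acoef α t j k := by
  have hτ := tau_pos_aux t hmono j hj
  have hτ' := tau_pos_aux t hmono (j + 1) (by omega)
  have hpos := base_pos_aux α hα t hmono k j hj hjk
  have hcont := cont_aux α hα t hmono k j hj hjk
  have hIcc : Set.uIcc (0:ℝ) 1 = Set.Icc 0 1 := Set.uIcc_of_le zero_le_one
  have hj' : tau t j = t j - t (j - 1) := rfl
  have hmin : min (t j) (tstar α t k) = t j := by
    apply min_eq_left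
    have := hpos 1 (by simp)
    linarith
  have hrt : r * tau t j < tau t (j + 1) := by
    unfold rho at hrho
    rw [Nat.add_sub_cancel, lt_div_iff₀ hτ] at hrho
    exact hrho
  have hsub : (∫ s in (t (j - 1))..(t j), (tstar α t k - s) ^ (-α))
      = tau t j * ∫ θ in (0:ℝ)..1, (tstar α t k - (t (j - 1) + tau t j * θ)) ^ (-α) := by
    rw [intervalIntegral.mul_integral_comp_add_mul
      (f := fun s => (tstar α t k - s) ^ (-α)) (tau t j) (t (j - 1))]
    congr 1 <;> rw [hj'] <;> ring
  rw [hmin, hsub, ← mul_assoc]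
  have e : r / ((1 + r) * tau t j) * tau t j = r / (1 + r) := by field_simp
  rw [e]
  unfold acoef
  rw [← intervalIntegral.integral_neg, ← intervalIntegral.integral_const_mul]
  apply intervalIntegral.integral_mono_on zero_le_one
  · apply ContinuousOn.intervalIntegrable
    apply ContinuousOn.mul continuousOn_const
    apply ContinuousOn.rpow_const (by fun_prop)
    intro θ hθ
    left
    have := hpos θ (hIcc ▸ hθ)
    rw [mul_comm (tau t j)]
    exact this.ne'
  · apply ContinuousOn.intervalIntegrable
    apply ContinuousOn.neg
    apply ContinuousOn.div (by fun_prop) (continuousOn_const.mul hcont)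
    intro θ hθ
    exact (mul_pos (by positivity) (rpow_pos_of_pos (hpos θ (hIcc ▸ hθ)) α)).ne'
  · intro θ hθ
    have p := hpos θ hθ
    rw [mul_comm (tau t j) θ, rpow_neg p.le]
    have hg := rpow_pos_of_pos p α
    set g := (tstar α t k - (t (j - 1) + θ * tau t j)) ^ α
    rw [← neg_div, ← div_eq_mul_inv, div_div, div_le_div_iff₀ (by positivity) (by positivity)]
    have hθ2 : 0 ≤ tau t j * (1 - θ) := mul_nonneg hτ.le (by linarith [hθ.2])
    have : r * (tau t j + tau t (j + 1)) ≤ (2 * (tau t j * (1 - θ)) + tau t (j + 1)) * (1 + r) := by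
      nlinarith [mul_nonneg hθ2 hr.le]
    have := mul_le_mul_of_nonneg_right this hg.le
    linarith

/-- (Q1): lower bound on the entries of the L2-1_σ matrix. -/
theorem Mentry_lower_bound (α : ℝ) (hα : α ∈ Set.Ioo (0:ℝ) 1)
    (t : ℕ → ℝ) (ht0 : t 0 = 0) (hmono : StrictMono t)
    (ρstar η : ℝ) (hρpos : 0 < ρstar)
    (hρroot : ρstar * (1 + ρstar) = 1 - 3 * ρstar ^ 2 * (1 + ρstar))
    (hηpos : 0 < η) (hηroot : 1 - 3 * η ^ 2 * (1 + η) = 0)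
    (hmesh : ∀ k : ℕ, 2 ≤ k →
      (ρstar < rho t k ∧ rho t k < η ∧ ρstar < rho t (k + 1) ∧
        rho t (k + 1) ≤ rho t k ^ 2 * (1 + rho t k) /
          (1 - 3 * rho t k ^ 2 * (1 + rho t k))) ∨
      (η ≤ rho t k ∧ ρstar < rho t (k + 1)))
    (k j : ℕ) (hj1 : 1 ≤ j) (hjk : j ≤ k) :
    Mentry α t k j
      ≥ ρstar / ((1 + ρstar) * tau t j) *
          ∫ s in (t (j - 1))..(min (t j) (tstar α t k)), (tstar α t k - s) ^ (-α) := by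
  have hrho : ∀ i, 1 ≤ i → ρstar < rho t (i + 1) := by
    intro i hi
    rcases hmesh (i + 1) (by omega) with h | h
    · exact h.1
    · rcases Nat.lt_or_ge i 2 with h2 | h2
      · have hρη : ρstar < η := by
          by_contra hc
          push Not at hc
          have h3 : η ^ 2 ≤ ρstar ^ 2 := by nlinarith
          have h4 : η ^ 2 * (1 + η) ≤ ρstar ^ 2 * (1 + ρstar) := by
            apply mul_le_mul h3 (by linarith) (by linarith) (by positivity)
          have h5 : 0 < ρstar * (1 + ρstar) := by positivity
          linarith
        linarith [h.1]
      · rcases hmesh i h2 with h' | h'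
        · exact h'.2.2.1
        · exact h'.2
  unfold Mentry
  rw [if_neg (by omega), ge_iff_le]
  rcases hjk.lt_or_eq with hlt | rfl
  · rw [if_neg hlt.ne]
    have ha := acoef_bound_aux α hα t hmono ρstar hρpos k j hj1 hlt (hrho j hj1)
    by_cases h1 : j = 1
    · subst h1
      rw [if_pos rfl]
      exact ha
    · rw [if_neg h1]
      have hc := ccoef_nonneg_aux α hα t hmono k (j - 1) (by omega) (by omega)
      unfold dcoef
      linarith
  · rw [if_pos rfl]
    have hτ := tau_pos_aux t hmono j hj1
    have hc : 0 ≤ ccoef α t (j - 1) j := by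
      by_cases h1 : j = 1
      · subst h1
        simp [ccoef, tau]
      · exact ccoef_nonneg_aux α hα t hmono j (j - 1) (by omega) (by omega)
    have hj' : tau t j = t j - t (j - 1) := rfl
    have hs : 0 < 1 - α / 2 := by linarith [hα.2]
    have hmin : min (t j) (tstar α t j) = tstar α t j := by
      apply min_eq_right
      unfold tstar
      nlinarith [mul_pos hα.1 hτ]
    have hint : (∫ s in (t (j - 1))..(tstar α t j), (tstar α t j - s) ^ (-α))
        = ((1 - α / 2) * tau t j) ^ (1 - α) / (1 - α) := by
      rw [intervalIntegral.integral_comp_sub_left (fun x => x ^ (-α)), sub_self,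
        integral_rpow (Or.inl (by linarith [hα.2]))]
      have e1 : tstar α t j - t (j - 1) = (1 - α / 2) * tau t j := by unfold tstar; ring
      have e2 : -α + 1 = 1 - α := by ring
      rw [e1, e2, zero_rpow (by linarith [hα.2]), sub_zero]
    have hα1 : 0 < 1 - α := by linarith [hα.2]
    have hD : ρstar / ((1 + ρstar) * tau t j) * (((1 - α / 2) * tau t j) ^ (1 - α) / (1 - α))
        = ρstar / (1 + ρstar) * ((1 - α / 2) ^ (1 - α) / ((1 - α) * tau t j ^ α)) := by
      rw [mul_rpow hs.le hτ.le, rpow_sub hτ, rpow_one]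
      have := rpow_pos_of_pos hτ α
      field_simp
    rw [hmin, hint, hD]
    have hq : ρstar / (1 + ρstar) ≤ 1 := by
      rw [div_le_one (by positivity)]; linarith
    have hX : 0 ≤ (1 - α / 2) ^ (1 - α) / ((1 - α) * tau t j ^ α) := by positivity
    have := mul_le_mul_of_nonneg_right hq hX
    linarith
end
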